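/- arXiv:1512.03732 — 4 statements merged into one kernel-verified Lean document; each statement's English description precedes it below -/
import Mathlib

section
/- For every ε > 0, every A > 0 and every n₀ ∈ ℕ there exist a harmonic function u : ℤ² → ℂ and a natural number n > n₀ such that Q_u(2n) > A·√(Q_u(n)·Q_u(4n)) + 2^{-n^{1/2+ε}}·Q_u(4n). -/
open Finset

noncomputable section

/-- The generating set `S = {(1,0),(-1,0),(0,1),(0,-1)}` of ℤ². -/
def Sfin : Finset (ℤ × ℤ) := {(1,0), (-1,0), (0,1), (0,-1)}

/-- `Q u n = E |u(S_n)|²` for the simple random walk on ℤ² started at 0. -/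
noncomputable def Q (u : ℤ × ℤ → ℂ) (n : ℕ) : ℝ :=
  (4 : ℝ)⁻¹ ^ n * ∑ s ∈ Fintype.piFinset (fun _ : Fin n => Sfin), ‖u (∑ i, s i)‖ ^ 2

/-- The discrete Laplacian on ℤ². -/
noncomputable def lap2 (u : ℤ × ℤ → ℂ) : ℤ × ℤ → ℂ :=
  fun x => (4 : ℂ)⁻¹ * ∑ s ∈ Sfin, (u (x + s) - u x)

open PowerSeries in
/-- The inverse of `1 - X^4`. -/
def Dser : PowerSeries ℂ := (1 - (X : PowerSeries ℂ) ^ 4)⁻¹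

lemma Dser_mul : Dser * (1 - (PowerSeries.X : PowerSeries ℂ) ^ 4) = 1 := by
  unfold Dser
  apply PowerSeries.inv_mul_cancel
  simp

/-- The constant power series `i`. -/
def Is : PowerSeries ℂ := PowerSeries.C Complex.I

lemma Is_sq : Is ^ 2 = -1 := by
  unfold Is
  rw [← map_pow, Complex.I_sq]; simp

open PowerSeries in
def Uu : (PowerSeries ℂ)ˣ where
  val := (1 + X) ^ 2 * (1 - Is * X) ^ 2 * Dser
  inv := (1 - X) ^ 2 * (1 + Is * X) ^ 2 * Dser
  val_inv := by
    have h1 := Dser_mul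
    have h2 := Is_sq
    have : (1 + X) ^ 2 * (1 - Is * X) ^ 2 * Dser * ((1 - X) ^ 2 * (1 + Is * X) ^ 2 * Dser)
      = (1 - X ^ 2) ^ 2 * (1 - Is ^ 2 * X ^ 2) ^ 2 * Dser ^ 2 := by ring
    rw [this, h2]
    calc _ = (Dser * (1 - (X : PowerSeries ℂ) ^ 4)) ^ 2 := by ring
      _ = 1 := by rw [h1]; simp
  inv_val := by
    have h1 := Dser_mul
    have h2 := Is_sq
    have : (1 - X) ^ 2 * (1 + Is * X) ^ 2 * Dser * ((1 + X) ^ 2 * (1 - Is * X) ^ 2 * Dser)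
      = (1 - X ^ 2) ^ 2 * (1 - Is ^ 2 * X ^ 2) ^ 2 * Dser ^ 2 := by ring
    rw [this, h2]
    calc _ = (Dser * (1 - (X : PowerSeries ℂ) ^ 4)) ^ 2 := by ring
      _ = 1 := by rw [h1]; simp

open PowerSeries in
def Vu : (PowerSeries ℂ)ˣ where
  val := (1 + X) ^ 2 * (1 + Is * X) ^ 2 * Dser
  inv := (1 - X) ^ 2 * (1 - Is * X) ^ 2 * Dser
  val_inv := by
    have h1 := Dser_mul
    have h2 := Is_sq
    have : (1 + X) ^ 2 * (1 + Is * X) ^ 2 * Dser * ((1 - X) ^ 2 * (1 - Is * X) ^ 2 * Dser)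
      = (1 - X ^ 2) ^ 2 * (1 - Is ^ 2 * X ^ 2) ^ 2 * Dser ^ 2 := by ring
    rw [this, h2]
    calc _ = (Dser * (1 - (X : PowerSeries ℂ) ^ 4)) ^ 2 := by ring
      _ = 1 := by rw [h1]; simp
  inv_val := by
    have h1 := Dser_mul
    have h2 := Is_sq
    have : (1 - X) ^ 2 * (1 - Is * X) ^ 2 * Dser * ((1 + X) ^ 2 * (1 + Is * X) ^ 2 * Dser)
      = (1 - X ^ 2) ^ 2 * (1 - Is ^ 2 * X ^ 2) ^ 2 * Dser ^ 2 := by ring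
    rw [this, h2]
    calc _ = (Dser * (1 - (X : PowerSeries ℂ) ^ 4)) ^ 2 := by ring
      _ = 1 := by rw [h1]; simp

/-- The discrete exponential, as a formal power series in its parameter. -/
def Eser (x : ℤ × ℤ) : PowerSeries ℂ := ((Uu ^ x.1 * Vu ^ x.2 : (PowerSeries ℂ)ˣ) : PowerSeries ℂ)

lemma Eser_add (x y : ℤ × ℤ) : Eser (x + y) = Eser x * Eser y := by
  unfold Eser
  rw [← Units.val_mul]
  congr 1
  simp only [Prod.fst_add, Prod.snd_add, zpow_add]
  exact mul_mul_mul_comm _ _ _ _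

lemma Eser_zero : Eser 0 = 1 := by simp [Eser]

/-- The three elementary series `X^k / (1 - X^4)`. -/
def Wser (k : ℕ) : PowerSeries ℂ := PowerSeries.X ^ k * Dser

open PowerSeries in
lemma Eser_1 : Eser (1, 0) =
    1 + 2 * (1 - Is) * Wser 1 - 4 * Is * Wser 2 - 2 * (1 + Is) * Wser 3 := by
  have h1 := Dser_mul
  have h2 := Is_sq
  have : Eser (1, 0) = (1 + X) ^ 2 * (1 - Is * X) ^ 2 * Dser := by simp [Eser, Uu]
  rw [this]; unfold Wser
  linear_combination h1 + ((1 + X) ^ 2 * X ^ 2 * Dser) * h2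

open PowerSeries in
lemma Eser_2 : Eser (-1, 0) =
    1 - 2 * (1 - Is) * Wser 1 - 4 * Is * Wser 2 + 2 * (1 + Is) * Wser 3 := by
  have h1 := Dser_mul
  have h2 := Is_sq
  have : Eser (-1, 0) = (1 - X) ^ 2 * (1 + Is * X) ^ 2 * Dser := by simp [Eser, Uu]
  rw [this]; unfold Wser
  linear_combination h1 + ((1 - X) ^ 2 * X ^ 2 * Dser) * h2

open PowerSeries in
lemma Eser_3 : Eser (0, 1) =
    1 + 2 * (1 + Is) * Wser 1 + 4 * Is * Wser 2 - 2 * (1 - Is) * Wser 3 := by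
  have h1 := Dser_mul
  have h2 := Is_sq
  have : Eser (0, 1) = (1 + X) ^ 2 * (1 + Is * X) ^ 2 * Dser := by simp [Eser, Vu]
  rw [this]; unfold Wser
  linear_combination h1 + ((1 + X) ^ 2 * X ^ 2 * Dser) * h2

open PowerSeries in
lemma Eser_4 : Eser (0, -1) =
    1 - 2 * (1 + Is) * Wser 1 + 4 * Is * Wser 2 + 2 * (1 - Is) * Wser 3 := by
  have h1 := Dser_mul
  have h2 := Is_sq
  have : Eser (0, -1) = (1 - X) ^ 2 * (1 - Is * X) ^ 2 * Dser := by simp [Eser, Vu]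
  rw [this]; unfold Wser
  linear_combination h1 + ((1 - X) ^ 2 * X ^ 2 * Dser) * h2

lemma sum_Sfin {M : Type*} [AddCommMonoid M] (f : ℤ × ℤ → M) :
    ∑ s ∈ Sfin, f s = f (1, 0) + (f (-1, 0) + (f (0, 1) + f (0, -1))) := by
  unfold Sfin
  rw [Finset.sum_insert (by decide), Finset.sum_insert (by decide), Finset.sum_insert (by decide),
    Finset.sum_singleton]

/-- The harmonic polynomials. -/
def hpol (d : ℕ) (x : ℤ × ℤ) : ℂ := PowerSeries.coeff d (Eser x)

lemma hpol_harmonic (d : ℕ) : lap2 (hpol d) = 0 := by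
  funext x
  unfold lap2 hpol
  simp only [Pi.zero_apply, mul_eq_zero]
  right
  simp only [Eser_add, ← map_sub]
  rw [← map_sum]
  have : ∑ s ∈ Sfin, (Eser x * Eser s - Eser x) = 0 := by
    rw [sum_Sfin, Eser_1, Eser_2, Eser_3, Eser_4]; ring
  rw [this]; simp

/-- Second moment of the `d`-th coefficient of `G * Eser (S_n)`. -/
def Phi (d n : ℕ) (G : PowerSeries ℂ) : ℝ :=
  (4 : ℝ)⁻¹ ^ n * ∑ s ∈ Fintype.piFinset (fun _ : Fin n => Sfin),
    ‖PowerSeries.coeff d (G * Eser (∑ i, s i))‖ ^ 2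

lemma Q_hpol (d n : ℕ) : Q (hpol d) n = Phi d n 1 := by
  simp [Q, Phi, hpol]

lemma Phi_nonneg (d n : ℕ) (G : PowerSeries ℂ) : 0 ≤ Phi d n G := by
  unfold Phi; positivity

lemma Phi_zero (d : ℕ) (G : PowerSeries ℂ) : Phi d 0 G = ‖PowerSeries.coeff d G‖ ^ 2 := by
  simp [Phi, Eser_zero]

lemma sum_pi_succ (n : ℕ) (f : (Fin (n + 1) → ℤ × ℤ) → ℝ) :
    ∑ s ∈ Fintype.piFinset (fun _ : Fin (n + 1) => Sfin), f s =
    ∑ s ∈ Fintype.piFinset (fun _ : Fin n => Sfin), ∑ a ∈ Sfin, f (Fin.cons a s) := by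
  rw [← Finset.sum_product']
  symm
  refine Finset.sum_bij' (fun p _ => Fin.cons p.2 p.1) (fun s _ => (Fin.tail s, s 0)) ?_ ?_ ?_ ?_ ?_
  · rintro ⟨s, a⟩ h
    simp only [Finset.mem_product, Fintype.mem_piFinset] at h ⊢
    intro i
    refine Fin.cases ?_ (fun j => ?_) i
    · simpa using h.2
    · simpa using h.1 j
  · intro s h
    simp only [Finset.mem_product, Fintype.mem_piFinset] at h ⊢
    exact ⟨fun i => h _, h 0⟩
  · rintro ⟨s, a⟩ h
    simp
  · intro s h
    simp
  · intro s h
    rfl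

lemma norm_identity (a b c e : ℂ) :
    ‖a + 2 * (1 - Complex.I) * b - 4 * Complex.I * c - 2 * (1 + Complex.I) * e‖ ^ 2 +
    (‖a - 2 * (1 - Complex.I) * b - 4 * Complex.I * c + 2 * (1 + Complex.I) * e‖ ^ 2 +
    (‖a + 2 * (1 + Complex.I) * b + 4 * Complex.I * c - 2 * (1 - Complex.I) * e‖ ^ 2 +
    ‖a - 2 * (1 + Complex.I) * b + 4 * Complex.I * c + 2 * (1 - Complex.I) * e‖ ^ 2)) =
    4 * (‖a‖ ^ 2 + 8 * ‖b‖ ^ 2 + 16 * ‖c‖ ^ 2 + 8 * ‖e‖ ^ 2) := by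
  simp only [← Complex.normSq_eq_norm_sq, Complex.normSq_apply]
  simp
  ring

lemma coeff_Is (d : ℕ) (G : PowerSeries ℂ) :
    PowerSeries.coeff d (Is * G) = Complex.I * PowerSeries.coeff d G := by
  simp [Is]

lemma coeff_comb (d : ℕ) (G A B C : PowerSeries ℂ) (x y z : ℂ) :
    PowerSeries.coeff d (G + PowerSeries.C x * A + PowerSeries.C y * B + PowerSeries.C z * C) =
    PowerSeries.coeff d G + x * PowerSeries.coeff d A + y * PowerSeries.coeff d B +
      z * PowerSeries.coeff d C := by
  simp

lemma step_identity (d : ℕ) (G : PowerSeries ℂ) :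
    ∑ a ∈ Sfin, ‖PowerSeries.coeff d (G * Eser a)‖ ^ 2 =
    4 * (‖PowerSeries.coeff d G‖ ^ 2 + 8 * ‖PowerSeries.coeff d (G * Wser 1)‖ ^ 2
      + 16 * ‖PowerSeries.coeff d (G * Wser 2)‖ ^ 2
      + 8 * ‖PowerSeries.coeff d (G * Wser 3)‖ ^ 2) := by
  rw [sum_Sfin, ← norm_identity]
  have key : ∀ x y z : ℂ, ∀ E : PowerSeries ℂ, E = 1 + PowerSeries.C x * Wser 1 +
      PowerSeries.C y * Wser 2 + PowerSeries.C z * Wser 3 →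
      PowerSeries.coeff d (G * E) = PowerSeries.coeff d G + x * PowerSeries.coeff d (G * Wser 1)
      + y * PowerSeries.coeff d (G * Wser 2) + z * PowerSeries.coeff d (G * Wser 3) := by
    intro x y z E h
    rw [← coeff_comb, h]
    congr 1; ring
  have hI : PowerSeries.C Complex.I = Is := rfl
  have hC2 : (PowerSeries.C (2 : ℂ)) = 2 := map_ofNat _ 2
  have hC4 : (PowerSeries.C (4 : ℂ)) = 4 := map_ofNat _ 4
  rw [key (2 * (1 - Complex.I)) (- (4 * Complex.I)) (-(2 * (1 + Complex.I))) (Eser (1, 0)) (by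
      rw [Eser_1]
      simp only [map_mul, map_sub, map_neg, map_add, map_one, hI, hC2, hC4]; ring),
    key (-(2 * (1 - Complex.I))) (- (4 * Complex.I)) ((2 * (1 + Complex.I))) (Eser (-1, 0)) (by
      rw [Eser_2]
      simp only [map_mul, map_sub, map_neg, map_add, map_one, hI, hC2, hC4]; ring),
    key (2 * (1 + Complex.I)) ((4 * Complex.I)) (-(2 * (1 - Complex.I))) (Eser (0, 1)) (by
      rw [Eser_3]
      simp only [map_mul, map_sub, map_neg, map_add, map_one, hI, hC2, hC4]; ring),
    key (-(2 * (1 + Complex.I))) ((4 * Complex.I)) ((2 * (1 - Complex.I))) (Eser (0, -1)) (by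
      rw [Eser_4]
      simp only [map_mul, map_sub, map_neg, map_add, map_one, hI, hC2, hC4]; ring)]
  simp only [neg_mul, sub_eq_add_neg]

lemma Phi_succ (d n : ℕ) (G : PowerSeries ℂ) :
    Phi d (n + 1) G = Phi d n G + 8 * Phi d n (G * Wser 1) + 16 * Phi d n (G * Wser 2)
      + 8 * Phi d n (G * Wser 3) := by
  unfold Phi
  rw [sum_pi_succ]
  have : ∀ s : Fin n → ℤ × ℤ, ∑ a ∈ Sfin, ‖PowerSeries.coeff d (G * Eser (∑ i,
      (Fin.cons a s : Fin (n + 1) → ℤ × ℤ) i))‖ ^ 2 =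
      4 * (‖PowerSeries.coeff d (G * Eser (∑ i, s i))‖ ^ 2
        + 8 * ‖PowerSeries.coeff d (G * Wser 1 * Eser (∑ i, s i))‖ ^ 2
        + 16 * ‖PowerSeries.coeff d (G * Wser 2 * Eser (∑ i, s i))‖ ^ 2
        + 8 * ‖PowerSeries.coeff d (G * Wser 3 * Eser (∑ i, s i))‖ ^ 2) := by
    intro s
    rw [mul_right_comm G (Wser 1), mul_right_comm G (Wser 2), mul_right_comm G (Wser 3),
      ← step_identity]
    refine Finset.sum_congr rfl fun a _ => ?_
    rw [Fin.sum_univ_succ]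
    simp only [Fin.cons_zero, Fin.cons_succ]
    rw [Eser_add, mul_comm (Eser a), mul_assoc]
  simp only [this, ← Finset.mul_sum, Finset.sum_add_distrib]
  rw [pow_succ]; ring

/-- Lower bound. -/
lemma Phi_lower (d n : ℕ) : ∀ (e j : ℕ) (_ : j + e = d) (G : PowerSeries ℂ),
    ‖PowerSeries.coeff 0 G‖ ^ 2 * (4 ^ e * ((2 * n).choose e : ℝ)) ≤
      Phi d n (PowerSeries.X ^ j * G) := by
  have hD : PowerSeries.coeff 0 Dser = 1 := by
    have := congrArg (PowerSeries.coeff 0) Dser_mul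
    simpa using this
  induction n with
  | zero =>
    intro e j h G
    rw [Phi_zero]
    rcases e with _ | e
    · have hj : j = d := by omega
      subst hj
      have := PowerSeries.coeff_X_pow_mul G j 0
      rw [zero_add] at this
      simp [this]
    · simp
  | succ n ih =>
    intro e j h G
    have hW : ∀ k, PowerSeries.X ^ j * G * Wser k = PowerSeries.X ^ (j + k) * (G * Dser) := by
      intro k; unfold Wser; ring
    have hG : PowerSeries.coeff 0 (G * Dser) = PowerSeries.coeff 0 G := by
      have hD' : PowerSeries.constantCoeff Dser = 1 := by simpa using hD
      simp [hD']
    rw [Phi_succ]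
    have h0 := ih e j h G
    have p1 := Phi_nonneg d n (PowerSeries.X ^ j * G * Wser 1)
    have p2 := Phi_nonneg d n (PowerSeries.X ^ j * G * Wser 2)
    have p3 := Phi_nonneg d n (PowerSeries.X ^ j * G * Wser 3)
    rcases e with _ | _ | e
    · simp only [Nat.choose_zero_right] at h0 ⊢
      linarith
    · have h1 := ih 0 (j + 1) (by omega) (G * Dser)
      rw [hG, ← hW] at h1
      simp only [zero_add, Nat.choose_zero_right, Nat.choose_one_right] at h0 h1 ⊢
      push_cast at h0 h1 ⊢
      nlinarith
    · have h1 := ih (e + 1) (j + 1) (by omega) (G * Dser)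
      have h2 := ih e (j + 2) (by omega) (G * Dser)
      rw [hG, ← hW] at h1 h2
      have hc : ((2 * (n + 1)).choose (e + 2) : ℝ) = (2 * n).choose (e + 2) +
          2 * (2 * n).choose (e + 1) + (2 * n).choose e := by
        rw [show 2 * (n + 1) = 2 * n + 1 + 1 by ring, Nat.choose_succ_succ, Nat.choose_succ_succ,
          Nat.choose_succ_succ]
        push_cast; ring
      rw [show e + 1 + 1 = e + 2 by rfl] at *
      rw [hc]
      have : ‖PowerSeries.coeff 0 G‖ ^ 2 * (4 ^ (e + 2) * (((2 * n).choose (e + 2) : ℝ) +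
          2 * (2 * n).choose (e + 1) + (2 * n).choose e)) =
          ‖PowerSeries.coeff 0 G‖ ^ 2 * (4 ^ (e + 2) * ((2 * n).choose (e + 2) : ℝ)) +
          8 * (‖PowerSeries.coeff 0 G‖ ^ 2 * (4 ^ (e + 1) * ((2 * n).choose (e + 1) : ℝ))) +
          16 * (‖PowerSeries.coeff 0 G‖ ^ 2 * (4 ^ e * ((2 * n).choose e : ℝ))) := by ring
      rw [this]; linarith

lemma Q_lower (d n : ℕ) : 4 ^ d * ((2 * n).choose d : ℝ) ≤ Q (hpol d) n := by
  rw [Q_hpol]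
  have := Phi_lower d n d 0 (by omega) 1
  simpa using this

/-- Truncated weighted `ℓ¹` norm. -/
def Nrm (d : ℕ) (r : ℝ) (G : PowerSeries ℂ) : ℝ :=
  ∑ j ∈ Finset.range (d + 1), ‖PowerSeries.coeff j G‖ * r ^ j

lemma Nrm_nonneg (d : ℕ) {r : ℝ} (hr : 0 ≤ r) (G : PowerSeries ℂ) : 0 ≤ Nrm d r G := by
  unfold Nrm; positivity

lemma Nrm_add (d : ℕ) {r : ℝ} (hr : 0 ≤ r) (G H : PowerSeries ℂ) :
    Nrm d r (G + H) ≤ Nrm d r G + Nrm d r H := by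
  unfold Nrm
  rw [← Finset.sum_add_distrib]
  refine Finset.sum_le_sum fun j _ => ?_
  rw [← add_mul, map_add]
  exact mul_le_mul_of_nonneg_right (norm_add_le _ _) (by positivity)

lemma Nrm_X (d : ℕ) {r : ℝ} (hr : 0 ≤ r) (G : PowerSeries ℂ) :
    Nrm d r (PowerSeries.X * G) ≤ r * Nrm d r G := by
  unfold Nrm
  rw [Finset.sum_range_succ', Finset.sum_range_succ, mul_add, Finset.mul_sum]
  have h0 : PowerSeries.coeff 0 (PowerSeries.X * G) = 0 := by simp
  rw [h0]
  simp only [PowerSeries.coeff_succ_X_mul, norm_zero, zero_mul, add_zero]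
  have : ∀ i, ‖PowerSeries.coeff i G‖ * r ^ (i + 1) = r * (‖PowerSeries.coeff i G‖ * r ^ i) := by
    intro i; ring
  simp only [this]
  have : 0 ≤ r * (‖PowerSeries.coeff d G‖ * r ^ d) := by positivity
  linarith

lemma Nrm_Xpow (d k : ℕ) {r : ℝ} (hr : 0 ≤ r) (G : PowerSeries ℂ) :
    Nrm d r (PowerSeries.X ^ k * G) ≤ r ^ k * Nrm d r G := by
  induction k with
  | zero => simp
  | succ k ih =>
    rw [pow_succ', mul_assoc, pow_succ', mul_assoc]
    exact (Nrm_X d hr _).trans (mul_le_mul_of_nonneg_left ih hr)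

lemma Nrm_W (d k : ℕ) {r : ℝ} (hr : 0 ≤ r) (hr1 : r < 1) (G : PowerSeries ℂ) :
    Nrm d r (G * Wser k) ≤ r ^ k / (1 - r ^ 4) * Nrm d r G := by
  have hr4 : r ^ 4 < 1 := pow_lt_one₀ hr hr1 (by norm_num)
  have e1 : G * Dser = G + PowerSeries.X ^ 4 * (G * Dser) := by
    linear_combination G * Dser_mul
  have h1 : Nrm d r (G * Dser) ≤ Nrm d r G + r ^ 4 * Nrm d r (G * Dser) := by
    calc _ = Nrm d r (G + PowerSeries.X ^ 4 * (G * Dser)) := by rw [← e1]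
      _ ≤ _ := Nrm_add d hr _ _
      _ ≤ _ := by gcongr; exact Nrm_Xpow d 4 hr _
  have h2 : Nrm d r (G * Dser) ≤ Nrm d r G / (1 - r ^ 4) := by
    rw [le_div_iff₀ (by linarith)]; linarith
  have e2 : G * Wser k = PowerSeries.X ^ k * (G * Dser) := by unfold Wser; ring
  rw [e2]
  calc _ ≤ r ^ k * Nrm d r (G * Dser) := Nrm_Xpow d k hr _
    _ ≤ r ^ k * (Nrm d r G / (1 - r ^ 4)) := by gcongr
    _ = _ := by ring

lemma Phi_upper (d n : ℕ) {r : ℝ} (hr : 0 < r) (hr1 : r < 1) : ∀ G : PowerSeries ℂ,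
    Phi d n G * (r ^ d) ^ 2 ≤ (1 + 8 * r ^ 2 / (1 - r ^ 2) ^ 2) ^ n * Nrm d r G ^ 2 := by
  induction n with
  | zero =>
    intro G
    rw [Phi_zero, ← mul_pow, pow_zero, one_mul]
    have : ‖PowerSeries.coeff d G‖ * r ^ d ≤ Nrm d r G := by
      unfold Nrm
      exact Finset.single_le_sum (f := fun j => ‖PowerSeries.coeff j G‖ * r ^ j)
        (fun j _ => by positivity) (Finset.self_mem_range_succ d)
    gcongr
  | succ n ih =>
    intro G
    have hr2 : r ^ 2 < 1 := pow_lt_one₀ hr.le hr1 (by norm_num)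
    have hr4 : r ^ 4 < 1 := pow_lt_one₀ hr.le hr1 (by norm_num)
    set B := 1 + 8 * r ^ 2 / (1 - r ^ 2) ^ 2 with hB
    have hB0 : 0 ≤ B := by positivity
    have hk : ∀ k, Phi d n (G * Wser k) * (r ^ d) ^ 2 ≤
        B ^ n * Nrm d r G ^ 2 * (r ^ k / (1 - r ^ 4)) ^ 2 := by
      intro k
      calc _ ≤ B ^ n * Nrm d r (G * Wser k) ^ 2 := ih _
        _ ≤ B ^ n * (r ^ k / (1 - r ^ 4) * Nrm d r G) ^ 2 := by
          have := Nrm_nonneg d hr.le (G * Wser k)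
          have := Nrm_W d k hr.le hr1 G
          gcongr
        _ = _ := by ring
    have h0 := ih G
    have h1 := hk 1
    have h2 := hk 2
    have h3 := hk 3
    have hid : 1 + 8 * (r ^ 1 / (1 - r ^ 4)) ^ 2 + 16 * (r ^ 2 / (1 - r ^ 4)) ^ 2
        + 8 * (r ^ 3 / (1 - r ^ 4)) ^ 2 = B := by
      have e : 1 - r ^ 4 = (1 - r ^ 2) * (1 + r ^ 2) := by ring
      have n1 : 1 - r ^ 2 ≠ 0 := by linarith
      have n2 : 1 + r ^ 2 ≠ 0 := by positivity
      rw [hB, e]; field_simp; ring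
    rw [Phi_succ, pow_succ]
    calc _ ≤ B ^ n * Nrm d r G ^ 2 * (1 + 8 * (r ^ 1 / (1 - r ^ 4)) ^ 2
        + 16 * (r ^ 2 / (1 - r ^ 4)) ^ 2 + 8 * (r ^ 3 / (1 - r ^ 4)) ^ 2) := by linarith
      _ = _ := by rw [hid]; ring

lemma Q_upper (d n : ℕ) {x : ℝ} (hx : 0 < x) (hx1 : x < 1) :
    Q (hpol d) n ≤ (1 + 8 * x / (1 - x) ^ 2) ^ n / x ^ d := by
  rw [Q_hpol, le_div_iff₀ (by positivity)]
  have h := Phi_upper d n (Real.sqrt_pos.mpr hx) (by rw [Real.sqrt_lt' one_pos]; simpa) 1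
  rw [← pow_mul, mul_comm d 2, pow_mul, Real.sq_sqrt hx.le] at h
  have hN : Nrm d (Real.sqrt x) 1 = 1 := by
    unfold Nrm
    rw [Finset.sum_range_succ']
    simp [PowerSeries.coeff_one]
  rw [hN] at h
  simpa using h

lemma one_add_le_exp' {z : ℝ} (h0 : 0 ≤ z) (h1 : z ≤ 1) :
    1 + z ≤ Real.exp (z - z ^ 2 / 2 + z ^ 3 / 2) := by
  have hw : 0 ≤ z - z ^ 2 / 2 := by nlinarith
  have hz3 : 0 ≤ z ^ 3 / 2 := by positivity
  have h := Real.quadratic_le_exp_of_nonneg (add_nonneg hw hz3)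
  have h2 : (z - z ^ 2 / 2) ^ 2 ≤ (z - z ^ 2 / 2 + z ^ 3 / 2) ^ 2 := by
    gcongr; linarith
  have h4 : 0 ≤ z ^ 4 := by positivity
  nlinarith

lemma base_bound {x : ℝ} (h0 : 0 < x) (h1 : x ≤ 1 / 8) :
    1 + 8 * x / (1 - x) ^ 2 ≤ Real.exp (8 * x - 16 * x ^ 2 + 96 * x ^ 3) := by
  have a1 : 8 * x / (1 - x) ^ 2 ≤ 8 * x + 16 * x ^ 2 + 32 * x ^ 3 := by
    rw [div_le_iff₀ (by nlinarith)]
    have : (8 * x + 16 * x ^ 2 + 32 * x ^ 3) * (1 - x) ^ 2 - 8 * x =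
      8 * x ^ 3 * (1 - 6 * x + 4 * x ^ 2) := by ring
    have : 0 ≤ 8 * x ^ 3 * (1 - 6 * x + 4 * x ^ 2) :=
      mul_nonneg (by positivity) (by nlinarith)
    linarith
  have a2 := one_add_le_exp' (z := 4 * x) (by linarith) (by linarith)
  have a3 := Real.add_one_le_exp (32 * x ^ 3)
  have hx3 : 0 ≤ 32 * x ^ 3 := by positivity
  calc 1 + 8 * x / (1 - x) ^ 2 ≤ (1 + 4 * x) ^ 2 + 32 * x ^ 3 := by linarith
    _ ≤ (1 + 4 * x) ^ 2 * (32 * x ^ 3 + 1) := by 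
        have h5 : 0 ≤ 32 * x ^ 3 * ((1 + 4 * x) ^ 2 - 1) := mul_nonneg hx3 (by nlinarith)
        linarith
    _ ≤ Real.exp (4 * x - (4 * x) ^ 2 / 2 + (4 * x) ^ 3 / 2) ^ 2 * Real.exp (32 * x ^ 3) := by
        gcongr
    _ = _ := by
        rw [← Real.exp_nat_mul, ← Real.exp_add]; congr 1; push_cast; ring

lemma Q_up {d n : ℕ} (hd : 1 ≤ d) (hdn : d ≤ n) :
    Q (hpol d) n ≤ (8 * n / d : ℝ) ^ d *
      Real.exp (d - d ^ 2 / (4 * n) + d ^ 3 / (4 * n ^ 2)) := by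
  have hd' : (0 : ℝ) < d := by exact_mod_cast hd
  have hn' : (0 : ℝ) < n := by exact_mod_cast hd.trans hdn
  have hdn' : (d : ℝ) ≤ n := by exact_mod_cast hdn
  have hx : (0 : ℝ) < d / (8 * n) := by positivity
  have hx1 : (d : ℝ) / (8 * n) ≤ 1 / 8 := by
    rw [div_le_div_iff₀ (by positivity) (by norm_num)]; linarith
  refine (Q_upper d n hx (by linarith)).trans ?_
  rw [div_eq_inv_mul, ← inv_pow, inv_div]
  gcongr
  calc _ ≤ Real.exp (8 * (d / (8 * n)) - 16 * (d / (8 * n)) ^ 2 + 96 * (d / (8 * n)) ^ 3) ^ n := by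
        gcongr; exact base_bound hx hx1
    _ ≤ _ := by
        rw [← Real.exp_nat_mul]
        apply Real.exp_le_exp.mpr
        have e : (n : ℝ) * (8 * (d / (8 * n)) - 16 * (d / (8 * n)) ^ 2 + 96 * (d / (8 * n)) ^ 3) =
          d - d ^ 2 / (4 * n) + 3 / 4 * (d ^ 3 / (4 * n ^ 2)) := by field_simp; ring
        rw [e]
        have : (0 : ℝ) ≤ d ^ 3 / (4 * n ^ 2) := by positivity
        linarith

lemma fact_bound (d : ℕ) : ((d + 1).factorial : ℝ) ≤ ((d : ℝ) + 1) ^ (d + 2) * Real.exp (-d) := by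
  induction d with
  | zero => simp
  | succ d ih =>
    rw [Nat.factorial_succ]
    push_cast
    have hp : (0 : ℝ) < (d : ℝ) + 2 := by positivity
    have h1 : ((d : ℝ) + 1) / (d + 2) ≤ Real.exp (-(1 / (d + 2))) := by
      have := Real.add_one_le_exp (-(1 / ((d : ℝ) + 2)))
      have e : ((d : ℝ) + 1) / (d + 2) = -(1 / ((d : ℝ) + 2)) + 1 := by field_simp; ring
      rw [e]; exact this
    have h2 : (((d : ℝ) + 1) / (d + 2)) ^ (d + 2) ≤ Real.exp (-1) := by
      calc _ ≤ (Real.exp (-(1 / ((d : ℝ) + 2)))) ^ (d + 2) := by gcongr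
        _ = _ := by
          rw [← Real.exp_nat_mul]; congr 1; push_cast; field_simp
    rw [div_pow, div_le_iff₀ (by positivity)] at h2
    calc ((d : ℝ) + 1 + 1) * ((d + 1).factorial : ℝ)
        ≤ ((d : ℝ) + 1 + 1) * (((d : ℝ) + 1) ^ (d + 2) * Real.exp (-d)) := by gcongr
      _ ≤ ((d : ℝ) + 1 + 1) * ((Real.exp (-1) * ((d : ℝ) + 2) ^ (d + 2)) * Real.exp (-d)) := by
          gcongr
      _ = _ := by
          rw [show -((d : ℝ) + 1) = -1 + -d by ring, Real.exp_add]; ring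

lemma fact_bound' {d : ℕ} (hd : 1 ≤ d) :
    (d.factorial : ℝ) ≤ (d : ℝ) ^ d * d * Real.exp (1 - d) := by
  obtain ⟨e, rfl⟩ : ∃ e, d = e + 1 := ⟨d - 1, by omega⟩
  have := fact_bound e
  push_cast
  calc _ ≤ _ := this
    _ = _ := by
      rw [show (1 : ℝ) - (e + 1) = -e by ring]; ring

lemma one_sub_ge {x : ℝ} (h0 : 0 ≤ x) (h1 : x ≤ 1 / 3) : Real.exp (-x - x ^ 2) ≤ 1 - x := by
  have h := Real.quadratic_le_exp_of_nonneg (x := x + x ^ 2) (by positivity)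
  have hpos : 0 < 1 - x := by linarith
  have : 1 ≤ (1 - x) * Real.exp (x + x ^ 2) := by
    have h2 : 1 ≤ (1 - x) * (1 + (x + x ^ 2) + (x + x ^ 2) ^ 2 / 2) := by
      have e : (1 - x) * (1 + (x + x ^ 2) + (x + x ^ 2) ^ 2 / 2) - 1 =
        x ^ 2 / 2 * (1 - x - x ^ 2 - x ^ 3) := by ring
      have : 0 ≤ x ^ 2 / 2 * (1 - x - x ^ 2 - x ^ 3) :=
        mul_nonneg (by positivity) (by nlinarith [mul_nonneg h0 h0, pow_le_pow_left₀ h0 h1 3])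
      linarith
    exact h2.trans (mul_le_mul_of_nonneg_left h hpos.le)
  rw [show -x - x ^ 2 = -(x + x ^ 2) by ring, Real.exp_neg]
  rw [inv_le_iff_one_le_mul₀ (Real.exp_pos _)]
  linarith

lemma desc_bound {M : ℕ} (hM : 1 ≤ M) : ∀ d : ℕ, 3 * d ≤ M →
    (M : ℝ) ^ d * Real.exp (-(d ^ 2 / (2 * M)) - d ^ 3 / M ^ 2) ≤ (M.descFactorial d : ℝ) := by
  have hM' : (0 : ℝ) < M := by exact_mod_cast hM
  intro d
  induction d with
  | zero => intro _; simp
  | succ d ih =>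
    intro h
    have ih := ih (by omega)
    rw [Nat.descFactorial_succ]
    push_cast [Nat.cast_sub (show d ≤ M by omega)]
    have hdM : (d : ℝ) / M ≤ 1 / 3 := by
      rw [div_le_div_iff₀ hM' (by norm_num)]
      have : 3 * (d + 1) ≤ M := h
      have : (3 : ℝ) * (d + 1) ≤ M := by exact_mod_cast this
      linarith
    have h1 := one_sub_ge (x := (d : ℝ) / M) (by positivity) hdM
    have e : ((M : ℝ) - d) = M * (1 - d / M) := by field_simp
    rw [e]
    calc (M : ℝ) ^ (d + 1) * Real.exp (-((d + 1) ^ 2 / (2 * M)) - (d + 1) ^ 3 / M ^ 2)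
        ≤ (M : ℝ) ^ (d + 1) * Real.exp ((-(d / M : ℝ) - (d / M) ^ 2)
            + (-(d ^ 2 / (2 * M)) - d ^ 3 / M ^ 2)) := by
          gcongr
          have e1 : (-(d / M : ℝ) - (d / M) ^ 2) + (-(d ^ 2 / (2 * M)) - d ^ 3 / M ^ 2) -
            (-((d + 1) ^ 2 / (2 * M)) - (d + 1) ^ 3 / M ^ 2) =
            1 / (2 * M) + (2 * d ^ 2 + 3 * d + 1) / M ^ 2 := by field_simp; ring
          have : (0 : ℝ) ≤ 1 / (2 * M) + (2 * d ^ 2 + 3 * d + 1) / M ^ 2 := by positivity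
          linarith
      _ = (M * Real.exp (-(d / M : ℝ) - (d / M) ^ 2)) *
          ((M : ℝ) ^ d * Real.exp (-(d ^ 2 / (2 * M)) - d ^ 3 / M ^ 2)) := by
          rw [Real.exp_add]; ring
      _ ≤ _ := by
          have hp : 0 ≤ (M : ℝ) * (1 - d / M) := mul_nonneg hM'.le (by linarith)
          gcongr

lemma Q_low {d n : ℕ} (hd : 1 ≤ d) (hdn : 3 * d ≤ 2 * n) :
    (8 * n / d : ℝ) ^ d *
      Real.exp (d - d ^ 2 / (4 * n) - d ^ 3 / (4 * n ^ 2) - 1) / d ≤ Q (hpol d) n := by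
  refine le_trans ?_ (Q_lower d n)
  have hd' : (0 : ℝ) < d := by exact_mod_cast hd
  have hn' : (0 : ℝ) < n := by exact_mod_cast (show 0 < n by omega)
  have h1 := desc_bound (M := 2 * n) (by omega) d hdn
  have h2 := fact_bound' hd
  rw [Nat.descFactorial_eq_factorial_mul_choose] at h1
  push_cast at h1
  have h3 : (2 * n : ℝ) ^ d * Real.exp (-(d ^ 2 / (2 * (2 * n))) - d ^ 3 / (2 * n) ^ 2) ≤
      ((d : ℝ) ^ d * d * Real.exp (1 - d)) * ((2 * n).choose d : ℝ) :=
    h1.trans (by gcongr)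
  have e : (8 * n / d : ℝ) ^ d *
      Real.exp (d - d ^ 2 / (4 * n) - d ^ 3 / (4 * n ^ 2) - 1) / d =
      4 ^ d * ((2 * n : ℝ) ^ d * Real.exp (-(d ^ 2 / (2 * (2 * n))) - d ^ 3 / (2 * n) ^ 2)) /
        ((d : ℝ) ^ d * d * Real.exp (1 - d)) := by
    have : (d - d ^ 2 / (4 * n) - d ^ 3 / (4 * n ^ 2) - 1 : ℝ) =
      (-(d ^ 2 / (2 * (2 * n))) - d ^ 3 / (2 * n) ^ 2) - (1 - d) := by ring
    rw [this, Real.exp_sub _ (1 - (d : ℝ)), div_pow, show (8 * n : ℝ) = 4 * (2 * n) by ring, mul_pow 4]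
    field_simp
  rw [e, div_le_iff₀ (by positivity)]
  calc _ ≤ (4 : ℝ) ^ d * (((d : ℝ) ^ d * d * Real.exp (1 - d)) * ((2 * n).choose d : ℝ)) := by
        gcongr
    _ = _ := by ring

/-- The quantitative core: conditions on `d, n` guaranteeing the inequality. -/
lemma core {d n : ℕ} {A Y : ℝ} (hA : 0 < A) (hd : 1 ≤ d) (hdn : 3 * d ≤ n)
    (hc : (d : ℝ) ^ 3 ≤ n ^ 2)
    (h1 : 2 * A * d * Real.exp 3 ≤ Real.exp (d ^ 2 / n / 32))
    (h2 : 2 * d * 2 ^ d * Real.exp (3 + d ^ 2 / n / 8) < Y) :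
    Q (hpol d) (2 * n) > A * Real.sqrt (Q (hpol d) n * Q (hpol d) (4 * n)) +
      Y⁻¹ * Q (hpol d) (4 * n) := by
  have hd' : (0 : ℝ) < d := by exact_mod_cast hd
  have hn' : (0 : ℝ) < n := by exact_mod_cast (show 0 < n by omega)
  have low := Q_low (d := d) (n := 2 * n) hd (by omega)
  have up1 := Q_up (d := d) (n := n) hd (by omega)
  have up4 := Q_up (d := d) (n := 4 * n) hd (by omega)
  have hQ1 : 0 ≤ Q (hpol d) n := by rw [Q_hpol]; exact Phi_nonneg _ _ _
  have hQ4 : 0 ≤ Q (hpol d) (4 * n) := by rw [Q_hpol]; exact Phi_nonneg _ _ _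
  push_cast at low up1 up4
  set T : ℝ := (d : ℝ) ^ 2 / n with hT
  set c : ℝ := (d : ℝ) ^ 3 / n ^ 2 with hcdef
  have hT0 : 0 ≤ T := by positivity
  have hc0 : 0 ≤ c := by positivity
  have hc1 : c ≤ 1 := by rw [hcdef, div_le_one (by positivity)]; exact hc
  set P : ℝ := (16 * n / d : ℝ) ^ d * Real.exp d with hP
  have hP0 : 0 < P := by positivity
  have low' : P * Real.exp (-T / 8 - 2) / d ≤ Q (hpol d) (2 * n) := by
    refine le_trans ?_ low
    rw [hP, mul_assoc, ← Real.exp_add, show (8 * (2 * n) / d : ℝ) = 16 * n / d by ring]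
    gcongr
    have e : (d : ℝ) - d ^ 2 / (4 * (2 * n)) - d ^ 3 / (4 * (2 * n) ^ 2) - 1 =
      d - T / 8 - c / 16 - 1 := by rw [hT, hcdef]; field_simp; ring
    rw [e]; linarith
  have up4' : Q (hpol d) (4 * n) ≤ P * 2 ^ d * Real.exp 1 := by
    refine up4.trans ?_
    have e0 : P * 2 ^ d * Real.exp 1 = (8 * (4 * n) / d : ℝ) ^ d * Real.exp (d + 1) := by
      rw [show (8 * (4 * n) / d : ℝ) = (16 * n / d) * 2 by ring, mul_pow, Real.exp_add, hP]; ring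
    rw [e0]
    refine mul_le_mul_of_nonneg_left (Real.exp_le_exp.mpr ?_) (by positivity)
    have e : (d : ℝ) - d ^ 2 / (4 * (4 * n)) + d ^ 3 / (4 * (4 * n) ^ 2) =
      d - T / 16 + c / 64 := by rw [hT, hcdef]; field_simp; ring
    rw [e]; linarith
  have sq' : Real.sqrt (Q (hpol d) n * Q (hpol d) (4 * n)) ≤ P * Real.exp (-5 * T / 32 + 1) := by
    apply Real.sqrt_le_iff.mpr
    refine ⟨by positivity, (mul_le_mul up1 up4 hQ4 (by positivity)).trans ?_⟩
    have e0 : (P * Real.exp (-5 * T / 32 + 1)) ^ 2 = ((8 * n / d : ℝ) ^ d * (8 * (4 * n) / d) ^ d) *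
        Real.exp (2 * d + 2 * (-5 * T / 32 + 1)) := by
      rw [hP, ← mul_pow, show (8 * n / d : ℝ) * (8 * (4 * n) / d) = (16 * n / d) ^ 2 by ring,
        mul_assoc, ← Real.exp_add, mul_pow, ← Real.exp_nat_mul]
      rw [← pow_mul, ← pow_mul, mul_comm d 2]
      congr 2; push_cast; ring
    rw [e0]
    rw [mul_mul_mul_comm, ← Real.exp_add]
    refine mul_le_mul_of_nonneg_left (Real.exp_le_exp.mpr ?_) (by positivity)
    have e : (d : ℝ) - d ^ 2 / (4 * n) + d ^ 3 / (4 * n ^ 2) +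
      (d - d ^ 2 / (4 * (4 * n)) + d ^ 3 / (4 * (4 * n) ^ 2)) =
      2 * d - 5 * T / 16 + 17 * c / 64 := by rw [hT, hcdef]; field_simp; ring
    rw [e]; linarith
  have hY : 0 < Y := lt_trans (by positivity) h2
  have b1 : A * Real.sqrt (Q (hpol d) n * Q (hpol d) (4 * n)) ≤
      P * Real.exp (-T / 8 - 2) / d / 2 := by
    calc _ ≤ A * (P * Real.exp (-5 * T / 32 + 1)) := by gcongr
      _ = P * (2 * A * d * Real.exp 3) * Real.exp (-5 * T / 32 - 2) / d / 2 := by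
        rw [show -5 * T / 32 + 1 = 3 + (-5 * T / 32 - 2) by ring, Real.exp_add]; field_simp
      _ ≤ P * Real.exp (T / 32) * Real.exp (-5 * T / 32 - 2) / d / 2 := by gcongr
      _ = _ := by
        rw [mul_assoc, ← Real.exp_add]; congr 4; ring
  have b2 : Y⁻¹ * Q (hpol d) (4 * n) < P * Real.exp (-T / 8 - 2) / d / 2 := by
    calc _ ≤ Y⁻¹ * (P * 2 ^ d * Real.exp 1) := by gcongr
      _ < _ := by
        rw [inv_mul_lt_iff₀ hY]
        have e : P * 2 ^ d * Real.exp 1 = (2 * d * 2 ^ d * Real.exp (3 + T / 8)) *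
          (P * Real.exp (-T / 8 - 2) / d / 2) := by
          rw [show (1 : ℝ) = (3 + T / 8) + (-T / 8 - 2) by ring, Real.exp_add]
          field_simp
        rw [e]
        gcongr
  linarith

theorem sharp_error :
    ∀ ε > (0 : ℝ), ∀ A > (0 : ℝ), ∀ n₀ : ℕ,
      ∃ u : ℤ × ℤ → ℂ, lap2 u = 0 ∧ ∃ n : ℕ, n > n₀ ∧
        Q u (2 * n) > A * Real.sqrt (Q u n * Q u (4 * n)) +
          (2 : ℝ) ^ (-((n : ℝ) ^ ((1 : ℝ) / 2 + ε))) * Q u (4 * n) := by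
  intro ε hε A hA n₀
  obtain ⟨K, hK⟩ : ∃ K : ℕ, 3 ≤ K ∧ 1 ≤ K * ε := by
    obtain ⟨k, hk⟩ := exists_nat_gt (1 / ε)
    refine ⟨k + 3, by omega, ?_⟩
    rw [div_lt_iff₀ hε] at hk
    push_cast
    nlinarith
  obtain ⟨hK3, hKε⟩ := hK
  have hlim : Filter.Tendsto (fun L : ℕ => Real.exp ((L : ℝ) / 32) / ((L : ℝ) / 32) ^ (K + 1))
      Filter.atTop Filter.atTop :=
    (Real.tendsto_exp_div_pow_atTop (K + 1)).comp
      (tendsto_natCast_atTop_atTop.atTop_div_const (by norm_num))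
  obtain ⟨L, hL, hL10, hLn⟩ := ((hlim.eventually_ge_atTop (2 * A * Real.exp 3 * 32 ^ (K + 1))).and
    ((Filter.eventually_ge_atTop 10).and (Filter.eventually_gt_atTop n₀))).exists
  have hLR : (10 : ℝ) ≤ L := by exact_mod_cast hL10
  have hL0 : (0 : ℝ) < L := by linarith
  refine ⟨hpol (L ^ (K + 1)), hpol_harmonic _, L ^ (2 * K), ?_, ?_⟩
  · have : L ≤ L ^ (2 * K) := Nat.le_self_pow (by omega) L
    omega
  have hT : ((L ^ (K + 1) : ℕ) : ℝ) ^ 2 / ((L ^ (2 * K) : ℕ) : ℝ) = (L : ℝ) ^ 2 := by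
    push_cast
    rw [div_eq_iff (by positivity)]; ring
  have hexp : (L : ℝ) ^ (K + 2) ≤ ((L ^ (2 * K) : ℕ) : ℝ) ^ ((1 : ℝ) / 2 + ε) := by
    push_cast
    rw [← Real.rpow_natCast, ← Real.rpow_natCast, ← Real.rpow_mul hL0.le]
    apply Real.rpow_le_rpow_of_exponent_le (by linarith)
    push_cast
    nlinarith
  rw [Real.rpow_neg (by norm_num)]
  apply core hA (Nat.one_le_pow _ _ (by omega))
  · have h3 : L ^ (2 * K) = L ^ (K + 1) * L ^ (K - 1) := by
      rw [← pow_add]; congr 1; omega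
    have : L ≤ L ^ (K - 1) := Nat.le_self_pow (by omega) L
    rw [h3, mul_comm 3]
    exact Nat.mul_le_mul_left _ (by omega)
  · push_cast
    rw [← pow_mul, ← pow_mul]
    exact pow_le_pow_right₀ (by linarith) (by omega)
  · rw [hT]
    rw [le_div_iff₀ (by positivity)] at hL
    have : Real.exp ((L : ℝ) / 32) ≤ Real.exp ((L : ℝ) ^ 2 / 32) := by
      gcongr; nlinarith
    refine le_trans (le_of_eq ?_) (hL.trans this)
    push_cast
    rw [div_pow]; field_simp
  · rw [hT]
    set d : ℕ := L ^ (K + 1) with hd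
    have hdR : (d : ℝ) = (L : ℝ) ^ (K + 1) := by rw [hd]; push_cast; rfl
    have hLd : (L : ℝ) ^ 2 ≤ d := by
      rw [hdR]; exact pow_le_pow_right₀ (by linarith) (by omega)
    have hd1 : (1 : ℝ) ≤ d := by nlinarith
    have hd2 : (d : ℝ) ≤ 2 ^ d := by exact_mod_cast (Nat.lt_two_pow_self (n := d)).le
    have he : Real.exp (3 + (L : ℝ) ^ 2 / 8) ≤ (2 : ℝ) ^ (2 * (3 + (L : ℝ) ^ 2 / 8)) := by
      rw [Real.rpow_def_of_pos (by norm_num)]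
      apply Real.exp_le_exp.mpr
      have := Real.log_two_gt_d9
      have : 0 ≤ 3 + (L : ℝ) ^ 2 / 8 := by positivity
      nlinarith
    calc 2 * (d : ℝ) * 2 ^ d * Real.exp (3 + (L : ℝ) ^ 2 / 8)
        ≤ 2 * (2 ^ d) * 2 ^ d * (2 : ℝ) ^ (2 * (3 + (L : ℝ) ^ 2 / 8)) := by gcongr
      _ = (2 : ℝ) ^ (1 + d + d + 2 * (3 + (L : ℝ) ^ 2 / 8) : ℝ) := by
        rw [Real.rpow_add (by norm_num), Real.rpow_add (by norm_num), Real.rpow_add (by norm_num),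
          Real.rpow_natCast, Real.rpow_one]
      _ < (2 : ℝ) ^ (((L ^ (2 * K) : ℕ) : ℝ) ^ ((1 : ℝ) / 2 + ε)) := by
        apply Real.rpow_lt_rpow_of_exponent_lt (by norm_num)
        refine lt_of_lt_of_le ?_ hexp
        have : (L : ℝ) ^ (K + 2) = d * L := by rw [hdR]; ring
        rw [this]
        nlinarith
end
end

section
/- If u : ℤ^d → ℂ is harmonic, then for every k ∈ ℕ and every n ∈ ℕ the k-th forward difference of Q_u satisfies Q_u^{(k)}(n) ≥ 0; that is, Q_u is absolutely monotonic. -/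
open Finset

noncomputable section

/-- The generating set of ℤ^d: the `2d` signed standard unit vectors `±e_i`. -/
def Sd (d : ℕ) : Finset (Fin d → ℤ) :=
  (Finset.univ.image fun i => Pi.single i 1) ∪ (Finset.univ.image fun i => Pi.single i (-1))

/-- `Q u n = E |u(S_n)|²` for the simple random walk on ℤ^d started at 0. -/
noncomputable def Qd (d : ℕ) (u : (Fin d → ℤ) → ℂ) (n : ℕ) : ℝ :=
  ((2 * d : ℝ))⁻¹ ^ n * ∑ s ∈ Fintype.piFinset (fun _ : Fin n => Sd d), ‖u (∑ i, s i)‖ ^ 2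

/-- The discrete Laplacian on ℤ^d. -/
noncomputable def lapD (d : ℕ) (u : (Fin d → ℤ) → ℂ) : (Fin d → ℤ) → ℂ :=
  fun x => (2 * d : ℂ)⁻¹ * ∑ s ∈ Sd d, (u (x + s) - u x)

/-- Forward difference operator: `fwd f n = f (n+1) - f n`. -/
def fwd (f : ℕ → ℝ) : ℕ → ℝ := fun n => f (n + 1) - f n

theorem Sd_card (d : ℕ) : (Sd d).card = 2 * d := by
  unfold Sd
  rw [Finset.card_union_of_disjoint, Finset.card_image_of_injective, Finset.card_image_of_injective]
  · simp; ring
  · intro i j h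
    by_contra hij
    have := congrFun h i
    simp [Pi.single_apply, hij] at this
  · intro i j h
    by_contra hij
    have := congrFun h i
    simp [Pi.single_apply, hij] at this
  · rw [Finset.disjoint_left]
    intro x hx hy
    simp only [Finset.mem_image, Finset.mem_univ, true_and] at hx hy
    obtain ⟨i, rfl⟩ := hx
    obtain ⟨j, hj⟩ := hy
    have := congrFun hj i
    simp only [Pi.single_apply] at this
    split_ifs at this <;> simp_all

theorem sum_succ_walk (d n : ℕ) (f : (Fin d → ℤ) → ℝ) :
    ∑ s ∈ Fintype.piFinset (fun _ : Fin (n + 1) => Sd d), f (∑ i, s i)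
      = ∑ w ∈ Fintype.piFinset (fun _ : Fin n => Sd d), ∑ s ∈ Sd d, f ((∑ i, w i) + s) := by
  rw [← Finset.sum_product']
  refine Finset.sum_nbij' (fun s => (Fin.tail s, s 0))
    (fun p => (Fin.cons p.2 p.1 : Fin (n + 1) → (Fin d → ℤ))) ?_ ?_ ?_ ?_ ?_
  · intro s hs
    simp only [Fintype.mem_piFinset, Finset.mem_product] at hs ⊢
    exact ⟨fun i => hs i.succ, hs 0⟩
  · intro p hp
    simp only [Fintype.mem_piFinset, Finset.mem_product] at hp ⊢
    intro i
    refine Fin.cases ?_ ?_ i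
    · simpa using hp.2
    · intro j; simpa using hp.1 j
  · intro s _; simp
  · intro p _; simp
  · intro s _
    rw [Fin.sum_univ_succ, add_comm]; rfl

theorem harm_sum (d : ℕ) (hd : 1 ≤ d) (u : (Fin d → ℤ) → ℂ) (hu : lapD d u = 0)
    (x : Fin d → ℤ) : ∑ s ∈ Sd d, (u (x + s) - u x) = 0 := by
  have h := congrFun hu x
  have : (d : ℂ) ≠ 0 := by exact_mod_cast (by omega : d ≠ 0)
  simpa [lapD, this] using h

theorem harm_diff (d : ℕ) (hd : 1 ≤ d) (u : (Fin d → ℤ) → ℂ) (hu : lapD d u = 0)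
    (t : Fin d → ℤ) : lapD d (fun x => u (x + t) - u x) = 0 := by
  funext x
  have h1 := harm_sum d hd u hu x
  have h2 := harm_sum d hd u hu (x + t)
  have : ∑ s ∈ Sd d, ((u (x + s + t) - u (x + s)) - (u (x + t) - u x)) = 0 := by
    rw [← sub_zero (0 : ℂ)]
    nth_rewrite 1 [← h2]
    rw [← h1, ← Finset.sum_sub_distrib]
    refine Finset.sum_congr rfl fun s _ => ?_
    rw [add_right_comm x s t]; ring
  simp [lapD, this]

theorem carre (d : ℕ) (hd : 1 ≤ d) (u : (Fin d → ℤ) → ℂ) (hu : lapD d u = 0)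
    (x : Fin d → ℤ) : ∑ s ∈ Sd d, ‖u (x + s)‖ ^ 2
      = (2 * d : ℝ) * ‖u x‖ ^ 2 + ∑ s ∈ Sd d, ‖u (x + s) - u x‖ ^ 2 := by
  have h1 := harm_sum d hd u hu x
  have key : ∀ s ∈ Sd d, ‖u (x + s)‖ ^ 2 =
      ‖u x‖ ^ 2 + ‖u (x + s) - u x‖ ^ 2 + 2 * (inner ℝ (u x) (u (x + s) - u x)) := by
    intro s _
    have := norm_add_sq_real (u x) (u (x + s) - u x)
    rw [add_sub_cancel] at this
    rw [this]; ring
  rw [Finset.sum_congr rfl key, Finset.sum_add_distrib, Finset.sum_add_distrib,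
    ← Finset.mul_sum, ← inner_sum, h1, inner_zero_right, Finset.sum_const, Sd_card]
  simp

theorem fwd_Qd (d : ℕ) (hd : 1 ≤ d) (u : (Fin d → ℤ) → ℂ) (hu : lapD d u = 0) :
    fwd (Qd d u) = fun n => ∑ t ∈ Sd d, (2 * d : ℝ)⁻¹ * Qd d (fun x => u (x + t) - u x) n := by
  funext n
  have hd' : (d : ℝ) ≠ 0 := by exact_mod_cast (by omega : d ≠ 0)
  have h2 : (2 * d : ℝ) ≠ 0 := by positivity
  unfold fwd Qd
  rw [sum_succ_walk d n (fun y => ‖u y‖ ^ 2),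
    Finset.sum_congr rfl (fun w _ => carre d hd u hu (∑ i, w i)), Finset.sum_add_distrib,
    ← Finset.mul_sum, ← Finset.mul_sum, ← Finset.mul_sum, Finset.sum_comm, pow_succ]
  field_simp
  ring

theorem fwd_iter_sum (d : ℕ) (c : ℝ) (F : (Fin d → ℤ) → ℕ → ℝ) (S : Finset (Fin d → ℤ)) (k : ℕ) :
    fwd^[k] (fun n => ∑ t ∈ S, c * F t n) = fun n => ∑ t ∈ S, c * fwd^[k] (F t) n := by
  induction k generalizing F with
  | zero => rfl
  | succ k ih =>
    rw [Function.iterate_succ_apply]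
    have : fwd (fun n => ∑ t ∈ S, c * F t n) = fun n => ∑ t ∈ S, c * fwd (F t) n := by
      funext n
      simp only [fwd, mul_sub, Finset.sum_sub_distrib]
    rw [this, ih]
    rfl

theorem Q_absolutely_monotonic (d : ℕ) (hd : 1 ≤ d)
    (u : (Fin d → ℤ) → ℂ) (hu : lapD d u = 0) (k n : ℕ) :
    0 ≤ fwd^[k] (Qd d u) n := by
  induction k generalizing u with
  | zero =>
    simp only [Function.iterate_zero, id]
    unfold Qd
    positivity
  | succ k ih =>
    rw [Function.iterate_succ_apply, fwd_Qd d hd u hu, fwd_iter_sum]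
    refine Finset.sum_nonneg fun t _ => mul_nonneg (by positivity) ?_
    exact ih _ (harm_diff d hd u hu t)
end
end

section
/- For every j ∈ ℕ there exists a real polynomial P with deg P < j (in particular P = 0 when j = 0) such that for every k ≥ j one has a_{k,j} = (1/j!)·(k/4)^j + P(k). -/
open Finset

noncomputable section

/-- Generalized binomial coefficient `binom(x,k) = (1/k!)·∏_{j<k}(x-j)`. -/
noncomputable def gbinom (x : ℝ) (k : ℕ) : ℝ :=
  (∏ j ∈ Finset.range k, (x - j)) / (Nat.factorial k)

/-- `F_k(x) = binom(x + (k-1)/2, k)`, a discretization of `x^k/k!`. -/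
noncomputable def F (k : ℕ) (x : ℝ) : ℝ := gbinom (x + ((k : ℝ) - 1) / 2) k

/-- `Z_k(x,y) = Σ_{l=0}^k i^l F_{k-l}(x) F_l(y)`, a harmonic discretization of `z^k/k!`. -/
noncomputable def Z (k : ℕ) (x y : ℝ) : ℂ :=
  ∑ l ∈ Finset.range (k + 1), Complex.I ^ l * (F (k - l) x : ℂ) * (F l y : ℂ)

/-- `Q_k := Q_{Z_k}` (with `Z_k` restricted to ℤ²). -/
noncomputable def Qk (k : ℕ) (n : ℕ) : ℝ := Q (fun p => Z k p.1 p.2) n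

/-- Newton coefficients `a_{k,j} = Q_k^{(k-j)}(0)`. -/
noncomputable def a (k j : ℕ) : ℝ := fwd^[k - j] (Qk k) 0

namespace Akj

/-- Averaging operator with steps `±r`, `±r i`. -/
def A (r : ℂ) : Module.End ℂ (ℂ → ℂ) where
  toFun f := fun z => 1 / 4 * (f (z + r) + f (z - r) + f (z + r * Complex.I) + f (z - r * Complex.I))
  map_add' f g := by funext z; simp only [Pi.add_apply]; ring
  map_smul' c f := by funext z; simp only [Pi.smul_apply, smul_eq_mul, RingHom.id_apply]; ring

lemma A_apply (r : ℂ) (f : ℂ → ℂ) (z : ℂ) : A r f z =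
    1 / 4 * (f (z + r) + f (z - r) + f (z + r * Complex.I) + f (z - r * Complex.I)) := rfl

lemma A_comm (r s : ℂ) : Commute (A r) (A s) := by
  refine LinearMap.ext fun f => funext fun z => ?_
  simp only [Module.End.mul_apply, A_apply]
  ring_nf

/-- Generalized version of `Z`. -/
def U (c : ℂ) (k : ℕ) (z : ℂ) : ℂ :=
  ∑ l ∈ Finset.range (k + 1), c ^ l * (F (k - l) z.re : ℂ) * (F l z.im : ℂ)

lemma F_zero (x : ℝ) : F 0 x = 1 := by simp [F, gbinom]

lemma F_diff (k : ℕ) (x : ℝ) : F (k + 1) (x + 1 / 2) - F (k + 1) (x - 1 / 2) = F k x := by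
  unfold F gbinom
  have h1 : ∏ j ∈ Finset.range (k + 1), (x + 1 / 2 + (((k + 1 : ℕ) : ℝ) - 1) / 2 - j)
      = (∏ j ∈ Finset.range k, (x + ((k : ℝ) - 1) / 2 - j)) * (x + ((k : ℝ) + 1) / 2) := by
    rw [Finset.prod_range_succ']
    congr 1
    · refine Finset.prod_congr rfl fun j _ => ?_
      push_cast; ring
    · push_cast; ring
  have h2 : ∏ j ∈ Finset.range (k + 1), (x - 1 / 2 + (((k + 1 : ℕ) : ℝ) - 1) / 2 - j)
      = (∏ j ∈ Finset.range k, (x + ((k : ℝ) - 1) / 2 - j)) * (x - ((k : ℝ) + 1) / 2) := by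
    rw [Finset.prod_range_succ]
    congr 1
    · refine Finset.prod_congr rfl fun j _ => ?_
      push_cast; ring
    · push_cast; ring
  rw [h1, h2, Nat.factorial_succ]
  have : (Nat.factorial k : ℝ) ≠ 0 := by positivity
  have : (k : ℝ) + 1 ≠ 0 := by positivity
  push_cast
  field_simp
  ring

lemma U_zero (c : ℂ) (z : ℂ) : U c 0 z = 1 := by simp [U, F_zero]

lemma U_diff_re (c : ℂ) (k : ℕ) (z : ℂ) :
    U c (k + 1) (z + 1 / 2) - U c (k + 1) (z - 1 / 2) = U c k z := by
  unfold U
  rw [Finset.sum_range_succ _ (k + 1), Finset.sum_range_succ _ (k + 1)]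
  have h1 : (z + 1 / 2).re = z.re + 1 / 2 := by norm_num
  have h2 : (z - 1 / 2).re = z.re - 1 / 2 := by norm_num
  have h3 : (z + 1 / 2).im = z.im := by norm_num
  have h4 : (z - 1 / 2).im = z.im := by norm_num
  rw [h1, h2, h3, h4, Nat.sub_self, F_zero, F_zero, add_sub_add_right_eq_sub,
    ← Finset.sum_sub_distrib]
  refine Finset.sum_congr rfl fun l hl => ?_
  have hl' : k + 1 - l = (k - l) + 1 := by
    have := Finset.mem_range.1 hl
    omega
  rw [hl', ← F_diff (k - l) z.re]
  push_cast
  ring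

lemma U_diff_im (c : ℂ) (k : ℕ) (z : ℂ) :
    U c (k + 1) (z + 1 / 2 * Complex.I) - U c (k + 1) (z - 1 / 2 * Complex.I) = c * U c k z := by
  unfold U
  rw [Finset.sum_range_succ' _ (k + 1), Finset.sum_range_succ' _ (k + 1)]
  have h1 : (z + 1 / 2 * Complex.I).re = z.re := by norm_num
  have h2 : (z - 1 / 2 * Complex.I).re = z.re := by norm_num
  have h3 : (z + 1 / 2 * Complex.I).im = z.im + 1 / 2 := by norm_num
  have h4 : (z - 1 / 2 * Complex.I).im = z.im - 1 / 2 := by norm_num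
  rw [h1, h2, h3, h4, F_zero, F_zero, add_sub_add_right_eq_sub,
    ← Finset.sum_sub_distrib, Finset.mul_sum]
  refine Finset.sum_congr rfl fun l hl => ?_
  rw [Nat.add_sub_add_right, ← F_diff l z.im]
  push_cast
  ring

/-- `|Z_k|²` as a complex valued function. -/
def G (k : ℕ) : ℂ → ℂ := fun z => U Complex.I k z * U (-Complex.I) k z

lemma G_eq (k : ℕ) (z : ℂ) : G k z = ((‖Z k z.re z.im‖ ^ 2 : ℝ) : ℂ) := by
  have h1 : U Complex.I k z = Z k z.re z.im := rfl
  have h2 : U (-Complex.I) k z = (starRingEnd ℂ) (Z k z.re z.im) := by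
    simp [U, Z, map_sum]
  rw [G, h1, h2, Complex.mul_conj, Complex.normSq_eq_norm_sq]

/-- The four differences of `U`, and harmonicity. -/
lemma U_steps (c : ℂ) (hc : c ^ 2 = -1) (k : ℕ) (z : ℂ) :
    U c (k + 1) (z + 1) = U c (k + 1) z + U c k (z + 1 / 2) ∧
    U c (k + 1) (z - 1) = U c (k + 1) z - U c k (z - 1 / 2) ∧
    U c (k + 1) (z + 1 * Complex.I) = U c (k + 1) z + c * U c k (z + 1 / 2 * Complex.I) ∧
    U c (k + 1) (z - 1 * Complex.I) = U c (k + 1) z - c * U c k (z - 1 / 2 * Complex.I) ∧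
    U c k (z + 1 / 2) - U c k (z - 1 / 2) +
      c * (U c k (z + 1 / 2 * Complex.I) - U c k (z - 1 / 2 * Complex.I)) = 0 := by
  refine ⟨?_, ?_, ?_, ?_, ?_⟩
  · have h := U_diff_re c k (z + 1 / 2)
    rw [show z + 1 / 2 + 1 / 2 = z + 1 by ring, show z + 1 / 2 - 1 / 2 = z by ring] at h
    linear_combination h
  · have h := U_diff_re c k (z - 1 / 2)
    rw [show z - 1 / 2 + 1 / 2 = z by ring, show z - 1 / 2 - 1 / 2 = z - 1 by ring] at h
    linear_combination -h
  · rw [← U_diff_im]; ring_nf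
  · rw [← U_diff_im]; ring_nf
  · cases k with
    | zero => simp [U_zero]
    | succ k => rw [U_diff_re, U_diff_im]; linear_combination U c k z * hc

lemma A_G (k : ℕ) : (A 1 - 1) (G (k + 1)) = A (1 / 2) (G k) := by
  funext z
  rw [LinearMap.sub_apply, Pi.sub_apply, A_apply, A_apply, Module.End.one_apply]
  unfold G
  have hI : Complex.I ^ 2 = -1 := Complex.I_sq
  obtain ⟨h1, h2, h3, h4, h5⟩ := U_steps Complex.I (by simp) k z
  obtain ⟨g1, g2, g3, g4, g5⟩ := U_steps (-Complex.I) (by simp) k z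
  rw [h1, h2, h3, h4, g1, g2, g3, g4]
  linear_combination (1 / 4 * U (-Complex.I) (k + 1) z) * h5
    + (1 / 4 * U (Complex.I) (k + 1) z) * g5
    - 1 / 4 * (U Complex.I k (z + 1 / 2 * Complex.I) * U (-Complex.I) k (z + 1 / 2 * Complex.I)
      + U Complex.I k (z - 1 / 2 * Complex.I) * U (-Complex.I) k (z - 1 / 2 * Complex.I)) * hI

lemma A_pow_G (j m : ℕ) : ((A 1 - 1) ^ m) (G (j + m)) = (A (1 / 2) ^ m) (G j) := by
  induction m with
  | zero => rfl
  | succ m ih =>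
    have hc : Commute ((A 1 - 1) ^ m) (A (1 / 2)) :=
      (((A_comm 1 (1 / 2)).sub_left (Commute.one_left _))).pow_left m
    rw [pow_succ, Module.End.mul_apply, ← add_assoc, A_G, ← Module.End.mul_apply, hc.eq,
      Module.End.mul_apply, ih, pow_succ', Module.End.mul_apply]

/-! ### The random walk sums -/

lemma sum_pi (n : ℕ) (f : ℂ → ℂ) : ∀ z : ℂ,
    (4 : ℂ)⁻¹ ^ n * ∑ s ∈ Fintype.piFinset (fun _ : Fin n => Sfin),
      f (z + (((∑ i, s i).1 : ℂ) + ((∑ i, s i).2 : ℂ) * Complex.I)) = (A 1 ^ n) f z := by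
  induction n with
  | zero => intro z; simp
  | succ n ih =>
    intro z
    have key : ∑ s ∈ Fintype.piFinset (fun _ : Fin (n + 1) => Sfin),
        f (z + (((∑ i, s i).1 : ℂ) + ((∑ i, s i).2 : ℂ) * Complex.I)) =
        ∑ t ∈ Sfin, ∑ s ∈ Fintype.piFinset (fun _ : Fin n => Sfin),
        f ((z + ((t.1 : ℂ) + (t.2 : ℂ) * Complex.I)) +
          (((∑ i, s i).1 : ℂ) + ((∑ i, s i).2 : ℂ) * Complex.I)) := by
      rw [← Finset.sum_product']
      symm
      refine Finset.sum_bij' (fun p _ => Fin.cons p.1 p.2) (fun s _ => (s 0, Fin.tail s))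
        ?_ ?_ ?_ ?_ ?_
      · rintro ⟨t, s⟩ h
        rw [Finset.mem_product, Fintype.mem_piFinset] at h
        rw [Fintype.mem_piFinset]
        intro i
        refine Fin.cases ?_ (fun i => ?_) i
        · simpa using h.1
        · simpa using h.2 i
      · intro s h
        rw [Fintype.mem_piFinset] at h
        rw [Finset.mem_product, Fintype.mem_piFinset]
        exact ⟨h 0, fun i => h i.succ⟩
      · rintro ⟨t, s⟩ h
        simp
      · intro s h
        simp
      · rintro ⟨t, s⟩ h
        rw [Fin.sum_univ_succ]
        simp only [Fin.cons_zero, Fin.cons_succ, Prod.fst_add, Prod.snd_add, Int.cast_add]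
        congr 1
        ring
    rw [key, pow_succ, mul_assoc, Finset.mul_sum, Finset.mul_sum]
    simp_rw [mul_left_comm _ (4 : ℂ)⁻¹, ih]
    rw [pow_succ', Module.End.mul_apply, A_apply]
    rw [Sfin, Finset.sum_insert (by decide), Finset.sum_insert (by decide),
      Finset.sum_insert (by decide), Finset.sum_singleton]
    push_cast
    ring_nf

lemma Qk_eq (k n : ℕ) : ((Qk k n : ℝ) : ℂ) = (A 1 ^ n) (G k) 0 := by
  rw [← sum_pi, Qk, Q]
  push_cast
  congr 1
  refine Finset.sum_congr rfl fun s _ => ?_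
  rw [G_eq]
  simp

lemma fwd_iter (f : ℕ → ℝ) (g : ℂ → ℂ) (m : ℕ)
    (h : ∀ n, ((f n : ℝ) : ℂ) = (A 1 ^ n) g 0) :
    ∀ n, ((fwd^[m] f n : ℝ) : ℂ) = (A 1 ^ n) (((A 1 - 1) ^ m) g) 0 := by
  induction m with
  | zero => simpa using h
  | succ m ih =>
    intro n
    rw [Function.iterate_succ_apply', fwd]
    push_cast
    rw [ih, ih, pow_succ' (A 1 - 1), Module.End.mul_apply, LinearMap.sub_apply, map_sub,
      Pi.sub_apply, pow_succ, Module.End.mul_apply, Module.End.one_apply]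

lemma a_eq (k j : ℕ) (h : j ≤ k) : ((a k j : ℝ) : ℂ) = (A (1 / 2) ^ (k - j)) (G j) 0 := by
  obtain ⟨m, rfl⟩ := Nat.exists_eq_add_of_le h
  rw [a, fwd_iter _ _ _ (Qk_eq _), Nat.add_sub_cancel_left, A_pow_G]
  simp

/-! ### Filtration by degree -/

/-- monomial `z^a z̄^b` -/
def mon (a b : ℕ) : ℂ → ℂ := fun z => z ^ a * (starRingEnd ℂ z) ^ b

/-- span of monomials of degree `< d`. -/
def W (d : ℤ) : Submodule ℂ (ℂ → ℂ) :=
  Submodule.span ℂ {f | ∃ a b : ℕ, (a : ℤ) + b < d ∧ f = mon a b}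

lemma mon_mem {a b : ℕ} {d : ℤ} (h : (a : ℤ) + b < d) : mon a b ∈ W d :=
  Submodule.subset_span ⟨a, b, h, rfl⟩

lemma W_mono {d e : ℤ} (h : d ≤ e) : W d ≤ W e :=
  Submodule.span_mono fun _ ⟨a, b, h1, h2⟩ => ⟨a, b, by omega, h2⟩

lemma W_nonpos {d : ℤ} (h : d ≤ 0) {f : ℂ → ℂ} (hf : f ∈ W d) : f = 0 := by
  have : W d = ⊥ := by
    rw [W, Submodule.span_eq_bot]
    rintro _ ⟨a, b, h1, -⟩
    omega
  rw [this] at hf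
  simpa using hf

lemma W_mul {m n d : ℤ} (h : m + n ≤ d + 1) {f g : ℂ → ℂ} (hf : f ∈ W m) (hg : g ∈ W n) :
    f * g ∈ W d := by
  have : f * g ∈ W m * W n := Submodule.mul_mem_mul hf hg
  rw [W, W, Submodule.span_mul_span] at this
  refine Submodule.span_mono ?_ this
  rintro _ ⟨_, ⟨a, b, h1, rfl⟩, _, ⟨a', b', h2, rfl⟩, rfl⟩
  refine ⟨a + a', b + b', by push_cast; omega, ?_⟩
  funext z
  simp only [mon, Pi.mul_apply]
  ring

/-- `f` has leading part `g` of degree `n`. -/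
def Lead (n : ℕ) (f g : ℂ → ℂ) : Prop := g ∈ W (n + 1) ∧ f - g ∈ W n

lemma Lead.mem {n : ℕ} {f g : ℂ → ℂ} (h : Lead n f g) : f ∈ W (n + 1) := by
  have := (W (n + 1)).add_mem (W_mono (by omega) h.2) h.1
  simpa using this

lemma Lead.mul {m n : ℕ} {f g f' g' : ℂ → ℂ} (h : Lead m f g) (h' : Lead n f' g') :
    Lead (m + n) (f * f') (g * g') := by
  refine ⟨W_mul (by push_cast; omega) h.1 h'.1, ?_⟩
  have : f * f' - g * g' = (f - g) * f' + g * (f' - g') := by ring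
  rw [this]
  exact add_mem (W_mul (by push_cast; omega) h.2 h'.mem) (W_mul (by push_cast; omega) h.1 h'.2)

lemma Lead.smul {n : ℕ} {f g : ℂ → ℂ} (c : ℂ) (h : Lead n f g) : Lead n (c • f) (c • g) :=
  ⟨Submodule.smul_mem _ _ h.1, by rw [← smul_sub]; exact Submodule.smul_mem _ _ h.2⟩

lemma Lead.sum {n : ℕ} {ι : Type*} (s : Finset ι) {f g : ι → ℂ → ℂ}
    (h : ∀ i ∈ s, Lead n (f i) (g i)) : Lead n (∑ i ∈ s, f i) (∑ i ∈ s, g i) :=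
  ⟨sum_mem fun i hi => (h i hi).1,
    by rw [← Finset.sum_sub_distrib]; exact sum_mem fun i hi => (h i hi).2⟩

lemma const_mem (c : ℂ) : (fun _ => c : ℂ → ℂ) ∈ W 1 := by
  have : (fun _ => c : ℂ → ℂ) = c • mon 0 0 := by funext z; simp [mon]
  rw [this]
  exact Submodule.smul_mem _ _ (mon_mem (by norm_num))

lemma id_mem : (fun z => z : ℂ → ℂ) ∈ W 2 := by
  have : (fun z => z : ℂ → ℂ) = mon 1 0 := by funext z; simp [mon]
  rw [this]
  exact mon_mem (by norm_num)

lemma conj_mem : (fun z => starRingEnd ℂ z : ℂ → ℂ) ∈ W 2 := by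
  have : (fun z => starRingEnd ℂ z : ℂ → ℂ) = mon 0 1 := by funext z; simp [mon]
  rw [this]
  exact mon_mem (by norm_num)

lemma re_mem : (fun z => (z.re : ℂ) : ℂ → ℂ) ∈ W 2 := by
  have : (fun z => (z.re : ℂ) : ℂ → ℂ)
      = (1 / 2 : ℂ) • ((fun z => z : ℂ → ℂ) + (fun z => starRingEnd ℂ z : ℂ → ℂ)) := by
    funext z
    simp [Complex.re_eq_add_conj]
    ring
  rw [this]
  exact Submodule.smul_mem _ _ (add_mem id_mem conj_mem)

lemma im_mem : (fun z => (z.im : ℂ) : ℂ → ℂ) ∈ W 2 := by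
  have : (fun z => (z.im : ℂ) : ℂ → ℂ)
      = (1 / (2 * Complex.I) : ℂ) • ((fun z => z : ℂ → ℂ) - (fun z => starRingEnd ℂ z : ℂ → ℂ)) := by
    funext z
    simp only [Complex.im_eq_sub_conj, Pi.smul_apply, Pi.sub_apply, smul_eq_mul]
    ring
  rw [this]
  exact Submodule.smul_mem _ _ (sub_mem id_mem conj_mem)

lemma Lead.prod {w : ℂ → ℂ} (hw : w ∈ W 2) (c : ℕ → ℂ) (n : ℕ) :
    Lead n (∏ i ∈ Finset.range n, (w + fun _ => c i)) (w ^ n) := by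
  induction n with
  | zero => exact ⟨const_mem 1, by simp⟩
  | succ n ih =>
    rw [Finset.prod_range_succ, pow_succ]
    exact ih.mul ⟨by simpa using hw, by simpa using const_mem (c n)⟩

lemma F_lead (φ : ℂ → ℝ) (hφ : (fun z => (φ z : ℂ)) ∈ W 2) (k : ℕ) :
    Lead k (fun z => (F k (φ z) : ℂ)) ((k.factorial : ℂ)⁻¹ • (fun z => (φ z : ℂ)) ^ k) := by
  have := (Lead.prod hφ (fun i => ((((k : ℝ) - 1) / 2 - i : ℝ) : ℂ)) k).smul (k.factorial : ℂ)⁻¹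
  convert this using 1
  funext z
  simp only [F, gbinom, Pi.smul_apply, Finset.prod_apply, Pi.add_apply, smul_eq_mul]
  push_cast
  rw [div_eq_inv_mul]
  congr 1
  refine Finset.prod_congr rfl fun i _ => ?_
  ring

lemma U_lead (c : ℂ) (k : ℕ) :
    Lead k (U c k) (fun z => (k.factorial : ℂ)⁻¹ * ((z.re : ℂ) + c * z.im) ^ k) := by
  have h := Lead.sum (n := k) (Finset.range (k + 1))
    (f := fun l => c ^ l • ((fun z => (F (k - l) z.re : ℂ)) * (fun z => (F l z.im : ℂ))))
    (g := fun l => c ^ l • ((((k - l).factorial : ℂ)⁻¹ • (fun z : ℂ => (z.re : ℂ)) ^ (k - l)) *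
      ((l.factorial : ℂ)⁻¹ • (fun z : ℂ => (z.im : ℂ)) ^ l)))
    (by
      intro l hl
      have hl' : k - l + l = k := by
        have := Finset.mem_range.1 hl
        omega
      have := ((F_lead _ re_mem (k - l)).mul (F_lead _ im_mem l)).smul (c ^ l)
      rwa [hl'] at this)
  convert h using 1
  · funext z
    simp only [U, Finset.sum_apply, Pi.smul_apply, Pi.mul_apply, smul_eq_mul, mul_assoc]
  · funext z
    simp only [Finset.sum_apply, Pi.smul_apply, Pi.mul_apply, smul_eq_mul, Pi.pow_apply]
    rw [add_comm, add_pow, Finset.mul_sum]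
    refine Finset.sum_congr rfl fun l hl => ?_
    have hl' : l ≤ k := by
      have := Finset.mem_range.1 hl
      omega
    rw [Nat.cast_choose ℂ hl']
    have h1 : (k.factorial : ℂ) ≠ 0 := by exact_mod_cast k.factorial_ne_zero
    have h2 : (l.factorial : ℂ) ≠ 0 := by exact_mod_cast l.factorial_ne_zero
    have h3 : ((k - l).factorial : ℂ) ≠ 0 := by exact_mod_cast (k - l).factorial_ne_zero
    rw [mul_pow]
    field_simp

lemma G_lead (j : ℕ) : Lead (j + j) (G j) (((j.factorial : ℂ)⁻¹ ^ 2) • mon j j) := by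
  have := (U_lead Complex.I j).mul (U_lead (-Complex.I) j)
  have hG : G j = U Complex.I j * U (-Complex.I) j := rfl
  rw [hG]
  convert this using 1
  funext z
  have h1 : (z.re : ℂ) + Complex.I * z.im = z := by
    rw [mul_comm]; exact Complex.re_add_im z
  have h2 : (z.re : ℂ) + -Complex.I * z.im = starRingEnd ℂ z := by
    apply Complex.ext <;> simp
  simp only [Pi.smul_apply, Pi.mul_apply, smul_eq_mul, mon, h1, h2]
  ring

/-! ### The Laplacian on the filtration -/

/-- second order Taylor part of `(w+s)^a` -/
def tay (s w : ℂ) (a : ℕ) : ℂ :=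
  w ^ a + a * s * w ^ (a - 1) + a * (a - 1) / 2 * s ^ 2 * w ^ (a - 2)

lemma pow_mem {w : ℂ → ℂ} (hw : w ∈ W 2) (n : ℕ) : w ^ n ∈ W (n + 1) := by
  simpa using (Lead.prod hw (fun _ => 0) n).1

lemma tay_lead2 {w : ℂ → ℂ} (hw : w ∈ W 2) (s : ℂ) (n : ℕ) :
    (fun z => (w z + s) ^ (n + 2) - tay s (w z) (n + 2)) ∈ W n := by
  induction n with
  | zero =>
    convert (W ((0 : ℕ) : ℤ)).zero_mem using 1
    funext z
    simp [tay]
    ring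
  | succ n ih =>
    have h1 := W_mul (d := (n + 1 : ℕ)) (by push_cast; omega) ih
      (add_mem hw (W_mono (by omega) (const_mem s)))
    have h2 := Submodule.smul_mem _ (((n : ℂ) + 2) * (n + 1) / 2 * s ^ 3) (pow_mem hw n)
    convert add_mem h1 h2 using 1
    funext z
    simp only [tay, Pi.add_apply, Pi.mul_apply, Pi.smul_apply, Pi.pow_apply, smul_eq_mul]
    have e1 : n + 1 + 2 - 1 = n + 2 := by omega
    have e2 : n + 1 + 2 - 2 = n + 1 := by omega
    have e3 : n + 2 - 1 = n + 1 := by omega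
    have e4 : n + 2 - 2 = n := by omega
    rw [e1, e2, e3, e4]
    push_cast
    ring

lemma tay_lead {w : ℂ → ℂ} (hw : w ∈ W 2) (s : ℂ) (n : ℕ) :
    (fun z => (w z + s) ^ n - tay s (w z) n) ∈ W (n - 2) := by
  match n with
  | 0 => convert (W _).zero_mem using 1; funext z; simp [tay]
  | 1 => convert (W _).zero_mem using 1; funext z; simp [tay]
  | n + 2 => simpa using tay_lead2 hw s n

lemma shift_mem {w : ℂ → ℂ} (hw : w ∈ W 2) (s : ℂ) (n : ℕ) :
    (fun z => (w z + s) ^ n) ∈ W (n + 1) :=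
  pow_mem (add_mem hw (W_mono (by omega) (const_mem s))) n

lemma tay_mem {w : ℂ → ℂ} (hw : w ∈ W 2) (s : ℂ) (n : ℕ) :
    (fun z => tay s (w z) n) ∈ W (n + 1) := by
  have := sub_mem (shift_mem hw s n) (W_mono (by omega) (tay_lead hw s n))
  convert this using 1
  funext z
  simp

lemma shift_mon (s : ℂ) (a b : ℕ) :
    (fun z => mon a b (z + s) - tay s z a * tay (starRingEnd ℂ s) (starRingEnd ℂ z) b)
      ∈ W (a + b - 2) := by
  have h1 := W_mul (d := a + b - 2) (by omega) (tay_lead id_mem s a)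
    (shift_mem conj_mem (starRingEnd ℂ s) b)
  have h2 := W_mul (d := a + b - 2) (by omega) (tay_mem id_mem s a)
    (tay_lead conj_mem (starRingEnd ℂ s) b)
  convert add_mem h1 h2 using 1
  funext z
  simp only [mon, map_add, Pi.add_apply, Pi.mul_apply]
  ring

/-- The half-step Laplacian. -/
def L : Module.End ℂ (ℂ → ℂ) := A (1 / 2) - 1

lemma L_mon (a b : ℕ) :
    L (mon a b) - ((a * b : ℂ) / 4) • mon (a - 1) (b - 1) ∈ W (a + b - 2) := by
  have h1 := shift_mon (1 / 2) a b
  have h2 := shift_mon (-(1 / 2)) a b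
  have h3 := shift_mon (1 / 2 * Complex.I) a b
  have h4 := shift_mon (-(1 / 2 * Complex.I)) a b
  have h5 : ((a * (a - 1) / 2 : ℂ) * (b * (b - 1) / 2) / 16) • mon (a - 2) (b - 2)
      ∈ W (a + b - 2) := by
    rcases lt_or_ge a 2 with ha | ha
    · have : (a : ℂ) * (a - 1) = 0 := by interval_cases a <;> simp
      rw [this]; simp
    rcases lt_or_ge b 2 with hb | hb
    · have : (b : ℂ) * (b - 1) = 0 := by interval_cases b <;> simp
      rw [this]; simp
    exact Submodule.smul_mem _ _ (mon_mem (by omega))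
  have h6 := add_mem (Submodule.smul_mem _ (1 / 4 : ℂ) (add_mem (add_mem h1 h2) (add_mem h3 h4))) h5
  convert h6 using 1
  funext z
  have hI2 : Complex.I ^ 2 = -1 := Complex.I_sq
  have hI4 : Complex.I ^ 4 = 1 := Complex.I_pow_four
  have c1 : (starRingEnd ℂ) (1 / 2) = 1 / 2 := by
    rw [map_div₀, map_one, map_ofNat]
  simp only [L, LinearMap.sub_apply, Pi.sub_apply, A_apply, Module.End.one_apply, Pi.smul_apply,
    Pi.add_apply, smul_eq_mul, map_neg, map_mul, Complex.conj_I, c1, ← sub_eq_add_neg]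
  simp only [mon, tay]
  generalize z ^ a = x0
  generalize z ^ (a - 1) = x1
  generalize z ^ (a - 2) = x2
  generalize (starRingEnd ℂ) z ^ b = y0
  generalize (starRingEnd ℂ) z ^ (b - 1) = y1
  generalize (starRingEnd ℂ) z ^ (b - 2) = y2
  ring_nf
  simp only [hI2, hI4]
  ring

lemma L_mem {d : ℤ} {f : ℂ → ℂ} (hf : f ∈ W d) : L f ∈ W (d - 2) := by
  refine Submodule.span_induction (p := fun f _ => L f ∈ W (d - 2)) ?_ ?_ ?_ ?_ hf
  · rintro _ ⟨a, b, h, rfl⟩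
    have h1 : ((a * b : ℂ) / 4) • mon (a - 1) (b - 1) ∈ W (d - 2) := by
      rcases Nat.eq_zero_or_pos a with rfl | ha
      · simp
      rcases Nat.eq_zero_or_pos b with rfl | hb
      · simp
      exact Submodule.smul_mem _ _ (mon_mem (by omega))
    have := add_mem (W_mono (by omega) (L_mon a b)) h1
    simpa using this
  · simp
  · intro x y _ _ hx hy
    rw [map_add]; exact add_mem hx hy
  · intro c x _ hx
    rw [map_smul]; exact Submodule.smul_mem _ _ hx

lemma L_pow_zero (j : ℕ) : ∀ {f : ℂ → ℂ}, f ∈ W (2 * j) → (L ^ j) f = 0 := by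
  induction j with
  | zero => intro f hf; simpa using W_nonpos (by simp) hf
  | succ j ih =>
    intro f hf
    rw [pow_succ, Module.End.mul_apply]
    exact ih (W_mono (by push_cast; omega) (L_mem hf))

lemma L_pow_mon (j : ℕ) : (L ^ j) (mon j j) = fun _ => (j.factorial : ℂ) ^ 2 / 4 ^ j := by
  induction j with
  | zero => funext z; simp [mon]
  | succ j ih =>
    have h1 := L_pow_zero j (W_mono (by push_cast; omega) (L_mon (j + 1) (j + 1)))
    rw [pow_succ, Module.End.mul_apply]
    rw [map_sub, sub_eq_zero] at h1
    rw [h1, map_smul, Nat.add_sub_cancel, ih]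
    funext z
    simp only [Pi.smul_apply, smul_eq_mul, Nat.factorial_succ]
    push_cast
    ring

lemma L_pow_G (j : ℕ) : (L ^ j) (G j) = fun _ => (1 : ℂ) / 4 ^ j := by
  have h1 := L_pow_zero j (W_mono (by push_cast; omega) (G_lead j).2)
  rw [map_sub, sub_eq_zero] at h1
  rw [h1, map_smul, L_pow_mon]
  funext z
  have : (j.factorial : ℂ) ≠ 0 := by exact_mod_cast j.factorial_ne_zero
  simp only [Pi.smul_apply, smul_eq_mul]
  field_simp

lemma L_pow_G_zero (j i : ℕ) (h : j < i) : (L ^ i) (G j) = 0 :=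
  L_pow_zero i (W_mono (by push_cast; omega) (G_lead j).mem)

lemma A_pow_eval (j m : ℕ) : (A (1 / 2) ^ m) (G j) 0 =
    ∑ i ∈ Finset.range (j + 1), (m.choose i : ℂ) * (L ^ i) (G j) 0 := by
  have hA : A (1 / 2) = L + 1 := by simp [L]
  have h1 : (A (1 / 2) ^ m) (G j) 0 =
      ∑ i ∈ Finset.range (m + 1), (m.choose i : ℂ) * (L ^ i) (G j) 0 := by
    rw [hA, (Commute.one_right L).add_pow, LinearMap.sum_apply, Finset.sum_apply]
    refine Finset.sum_congr rfl fun i _ => ?_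
    rw [one_pow, mul_one, ← nsmul_eq_mul', LinearMap.smul_apply, Pi.smul_apply, nsmul_eq_mul]
  rw [h1]
  have e1 : ∑ i ∈ Finset.range (m + 1), (m.choose i : ℂ) * (L ^ i) (G j) 0 =
      ∑ i ∈ Finset.range (m + j + 1), (m.choose i : ℂ) * (L ^ i) (G j) 0 := by
    refine Finset.sum_subset (Finset.range_mono (by omega)) fun i _ hi => ?_
    rw [Nat.choose_eq_zero_of_lt (by simpa using hi)]
    simp
  have e2 : ∑ i ∈ Finset.range (j + 1), (m.choose i : ℂ) * (L ^ i) (G j) 0 =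
      ∑ i ∈ Finset.range (m + j + 1), (m.choose i : ℂ) * (L ^ i) (G j) 0 := by
    refine Finset.sum_subset (Finset.range_mono (by omega)) fun i _ hi => ?_
    rw [L_pow_G_zero j i (by simpa using hi)]
    simp
  rw [e1, e2]

/-- The polynomial `i! * binom(k-j, i)` in `k`. -/
def B (j i : ℕ) : Polynomial ℝ := (descPochhammer ℝ i).comp (Polynomial.X - Polynomial.C (j : ℝ))

lemma B_monic (j i : ℕ) : (B j i).Monic :=
  (monic_descPochhammer ℝ i).comp_X_sub_C _

lemma B_natDegree (j i : ℕ) : (B j i).natDegree = i := by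
  rw [B, Polynomial.natDegree_comp, Polynomial.natDegree_X_sub_C, mul_one,
    descPochhammer_natDegree]

lemma B_degree (j i : ℕ) : (B j i).degree = i := by
  rw [Polynomial.degree_eq_natDegree (B_monic j i).ne_zero, B_natDegree]

lemma B_eval (j i k : ℕ) (h : j ≤ k) :
    ((k - j).choose i : ℝ) = (i.factorial : ℝ)⁻¹ * (B j i).eval (k : ℝ) := by
  rw [B, Polynomial.eval_comp, Polynomial.eval_sub, Polynomial.eval_X, Polynomial.eval_C,
    ← Nat.cast_sub h, descPochhammer_eval_eq_descFactorial, Nat.descFactorial_eq_factorial_mul_choose]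
  have : (i.factorial : ℝ) ≠ 0 := by positivity
  push_cast
  field_simp

lemma a_formula (k j : ℕ) (h : j ≤ k) : a k j =
    ∑ i ∈ Finset.range j, (i.factorial : ℝ)⁻¹ * (B j i).eval (k : ℝ) * ((L ^ i) (G j) 0).re
      + (j.factorial : ℝ)⁻¹ * (B j j).eval (k : ℝ) * (1 / 4 ^ j) := by
  have h1 := congrArg Complex.re (a_eq k j h)
  rw [Complex.ofReal_re, A_pow_eval, Finset.sum_range_succ, L_pow_G] at h1
  rw [h1, Complex.add_re, Complex.re_sum, ← B_eval j j k h]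
  congr 1
  · refine Finset.sum_congr rfl fun i _ => ?_
    rw [← B_eval j i k h]
    simp
  · have : ((k - j).choose j : ℂ) * (1 / 4 ^ j) = (((k - j).choose j * (1 / 4 ^ j) : ℝ) : ℂ) := by
      push_cast; rfl
    rw [this, Complex.ofReal_re]

end Akj

theorem akj_main_coefficient (j : ℕ) :
    ∃ P : Polynomial ℝ, P.degree < (j : WithBot ℕ) ∧
      ∀ k : ℕ, j ≤ k →
        a k j = (1 / (Nat.factorial j : ℝ)) * ((k : ℝ) / 4) ^ j + P.eval (k : ℝ) := by
  classical
  refine ⟨∑ i ∈ Finset.range j,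
      Polynomial.C ((i.factorial : ℝ)⁻¹ * ((Akj.L ^ i) (Akj.G j) 0).re) * Akj.B j i
      + Polynomial.C ((j.factorial : ℝ)⁻¹ * (1 / 4 ^ j)) * (Akj.B j j - Polynomial.X ^ j), ?_, ?_⟩
  · have hsmul : ∀ (c : ℝ) (p : Polynomial ℝ), p.degree < (j : WithBot ℕ) →
        (Polynomial.C c * p).degree < (j : WithBot ℕ) := by
      intro c p hp
      rw [← Polynomial.smul_eq_C_mul]
      exact lt_of_le_of_lt (Polynomial.degree_smul_le c p) hp
    refine lt_of_le_of_lt (Polynomial.degree_add_le _ _) (max_lt ?_ ?_)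
    · rw [← Polynomial.mem_degreeLT]
      refine sum_mem fun i hi => ?_
      rw [Polynomial.mem_degreeLT]
      refine hsmul _ _ ?_
      rw [Akj.B_degree]
      exact_mod_cast Finset.mem_range.1 hi
    · refine hsmul _ _ ?_
      rw [← Akj.B_degree j j]
      refine Polynomial.degree_sub_lt_left ?_ (Akj.B_monic j j).ne_zero ?_
      · rw [Akj.B_degree, Polynomial.degree_X_pow]
      · rw [(Akj.B_monic j j).leadingCoeff, Polynomial.leadingCoeff_X_pow]
  · intro k hk
    rw [Akj.a_formula k j hk, Polynomial.eval_add, Polynomial.eval_finsetSum]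
    simp only [Polynomial.eval_mul, Polynomial.eval_C, Polynomial.eval_sub, Polynomial.eval_pow,
      Polynomial.eval_X]
    have : ∀ i ∈ Finset.range j, (i.factorial : ℝ)⁻¹ * (Akj.B j i).eval (k : ℝ)
        * ((Akj.L ^ i) (Akj.G j) 0).re = (i.factorial : ℝ)⁻¹ * ((Akj.L ^ i) (Akj.G j) 0).re
        * (Akj.B j i).eval (k : ℝ) := fun i _ => by ring
    rw [Finset.sum_congr rfl this, div_pow]
    ring
end
end

section
/- There exist constants A₁ > 0 and B₁ > 0 such that for all k, j ∈ ℕ with j ≤ k one has 0 ≤ a_{k,j} ≤ B₁·binom(A₁·k, j). -/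
open Finset

noncomputable section

lemma gb_succ_left (y : ℝ) (k : ℕ) : gbinom (y+1) (k+1) = (y+1)/(k+1) * gbinom y k := by
  unfold gbinom
  rw [Finset.prod_range_succ', Nat.factorial_succ]
  have h : ∀ j ∈ Finset.range k, (y + 1 - ((j+1 : ℕ):ℝ)) = y - j := by
    intro j _; push_cast; ring
  rw [Finset.prod_congr rfl h]
  have h1 : (Nat.factorial k : ℝ) ≠ 0 := by positivity
  have h2 : (k + 1 : ℝ) ≠ 0 := by positivity
  push_cast
  field_simp
  ring

lemma gb_succ_right (y : ℝ) (k : ℕ) : gbinom y (k+1) = (y-k)/(k+1) * gbinom y k := by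
  unfold gbinom
  rw [Finset.prod_range_succ, Nat.factorial_succ]
  have h1 : (Nat.factorial k : ℝ) ≠ 0 := by positivity
  have h2 : (k + 1 : ℝ) ≠ 0 := by positivity
  push_cast
  field_simp

lemma gb_nat (n k : ℕ) : gbinom n k = Nat.choose n k := by
  induction k generalizing n with
  | zero => simp [gbinom]
  | succ k ih =>
    cases n with
    | zero => simp [gbinom, Finset.prod_range_succ']
    | succ n =>
      push_cast
      rw [gb_succ_left, ih]
      have h2 : (k + 1 : ℝ) ≠ 0 := by positivity
      have := Nat.add_one_mul_choose_eq n k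
      have h3 : ((n:ℝ)+1) * n.choose k = (n+1).choose (k+1) * (k+1) := by exact_mod_cast this
      field_simp
      linarith

lemma F_zero (x : ℝ) : F 0 x = 1 := by simp [F, gbinom]

lemma F_rec (k : ℕ) (x : ℝ) : F (k+1) (x + 1/2) - F (k+1) (x-1/2) = F k x := by
  unfold F
  have e1 : x + 1/2 + (((k+1:ℕ):ℝ) - 1)/2 = (x + ((k:ℝ)-1)/2) + 1 := by push_cast; ring
  have e2 : x - 1/2 + (((k+1:ℕ):ℝ) - 1)/2 = (x + ((k:ℝ)-1)/2) := by push_cast; ring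
  rw [e1, e2, gb_succ_left, gb_succ_right]
  have h2 : (k + 1 : ℝ) ≠ 0 := by positivity
  field_simp
  ring

lemma F_half (k : ℕ) : F (k+1) (1/2) = F k 0 / 2 := by
  unfold F
  have e1 : (1:ℝ)/2 + (((k+1:ℕ):ℝ) - 1)/2 = (0 + ((k:ℝ)-1)/2) + 1 := by push_cast; ring
  rw [e1, gb_succ_left]
  have h2 : (k + 1 : ℝ) ≠ 0 := by positivity
  field_simp
  ring

lemma F_one_zero : F 1 0 = 0 := by simp [F, gbinom]

lemma c_rec (k : ℕ) : 4 * ((k:ℝ)+2) * F (k+2) 0 = -(k+1) * F k 0 := by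
  unfold F
  have e1 : (0:ℝ) + (((k+2:ℕ):ℝ) - 1)/2 = (0 + ((k:ℝ)-1)/2) + 1 := by push_cast; ring
  rw [e1, gb_succ_left, gb_succ_right]
  have h2 : (k + 1 : ℝ) ≠ 0 := by positivity
  have h3 : (k + 2 : ℝ) ≠ 0 := by positivity
  have h4 : (k + 1 + 1: ℝ) ≠ 0 := by positivity
  push_cast
  field_simp
  ring

lemma c_odd (n : ℕ) (h : n % 2 = 1) : F n 0 = 0 := by
  induction n using Nat.strong_induction_on with
  | _ n ih =>
    match n, h with
    | 1, _ => exact F_one_zero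
    | n+2, h =>
      have h1 := ih n (by omega) (by omega)
      have h2 := c_rec n
      rw [h1, mul_zero] at h2
      have h3 : 4 * ((n:ℝ)+2) ≠ 0 := by positivity
      exact (mul_eq_zero.mp h2).resolve_left h3

lemma c_bound (n : ℕ) : |F n 0| ≤ (1/2)^n := by
  induction n using Nat.strong_induction_on with
  | _ n ih =>
    match n with
    | 0 => simp [F_zero]
    | 1 => simp [F_one_zero]
    | n+2 =>
      have h1 := ih n (by omega)
      have h2 := c_rec n
      have h3 : F (n+2) 0 = -(((n:ℝ)+1)/(4*(n+2))) * F n 0 := by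
        field_simp
        linarith
      rw [h3, abs_mul, abs_neg, abs_of_nonneg (by positivity), pow_add]
      have h4 : ((n:ℝ)+1)/(4*(n+2)) ≤ (1/2)^2 := by
        rw [div_le_iff₀ (by positivity)]; linarith
      calc _ ≤ (1/2:ℝ)^2 * (1/2)^n := by gcongr
        _ = _ := by ring

open PowerSeries in
def G (x : ℝ) : PowerSeries ℂ := PowerSeries.mk fun n => (F n x : ℂ)

lemma G_rec (x : ℝ) : G (x+1/2) = G (x-1/2) + PowerSeries.X * G x := by
  ext n
  cases n with
  | zero => simp [G, F_zero]
  | succ n =>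
    rw [map_add, PowerSeries.coeff_succ_X_mul]
    simp only [G, PowerSeries.coeff_mk]
    rw [← F_rec n x]; push_cast; ring

lemma G_half : G (1/2) = 1 + PowerSeries.C (1/2:ℂ) * (PowerSeries.X * G 0) := by
  ext n
  cases n with
  | zero => simp [G, F_zero]
  | succ n =>
    rw [map_add, PowerSeries.coeff_C_mul, PowerSeries.coeff_succ_X_mul]
    simp only [G, PowerSeries.coeff_mk]
    rw [F_half n]; push_cast; simp [PowerSeries.coeff_one]; ring

/-- the series `1 + t²/4` -/
def T : PowerSeries ℂ := 1 + PowerSeries.C (1/4:ℂ) * PowerSeries.X^2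

open PowerSeries in
lemma C_ode : T * derivative ℂ (G 0) = - (PowerSeries.C (1/4:ℂ) * (X * G 0)) := by
  ext n
  unfold T
  rw [add_mul, map_add, one_mul, mul_assoc, PowerSeries.coeff_C_mul, map_neg, PowerSeries.coeff_C_mul,
    pow_two, mul_assoc]
  match n with
  | 0 => simp [coeff_derivative, G, F_one_zero]
  | 1 =>
    have h := c_rec 0
    have h' : (4 * ((0:ℂ)+2) * F 2 0) = -(0+1) * F 0 0 := by exact_mod_cast h
    rw [coeff_succ_X_mul, coeff_succ_X_mul]
    simp [coeff_derivative, G] at h' ⊢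
    linear_combination h'/4
  | n+2 =>
    have h := c_rec (n+1)
    have h' : (4 * (((n+1:ℕ):ℂ)+2) * F (n+1+2) 0) = -((n+1:ℕ)+1) * F (n+1) 0 := by exact_mod_cast h
    rw [coeff_succ_X_mul, coeff_succ_X_mul, coeff_succ_X_mul]
    simp [coeff_derivative, G] at h' ⊢
    linear_combination h'/4

open PowerSeries in
lemma C_sq : T * (G 0)^2 = 1 := by
  apply PowerSeries.derivative.ext
  · have h := C_ode
    have hT : derivative ℂ T = PowerSeries.C (1/2:ℂ) * X := by
      unfold T
      ext n
      rw [map_add, map_add, coeff_derivative, coeff_derivative, coeff_C_mul, coeff_C_mul,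
        coeff_X_pow, coeff_X, coeff_one]
      by_cases h : n = 1
      · subst h; norm_num
      · have : n + 1 ≠ 2 := by omega
        simp [h, this]
    have e : PowerSeries.C (1/2:ℂ) = 2 * PowerSeries.C (1/4:ℂ) := by
      rw [show (2 : PowerSeries ℂ) = PowerSeries.C (2:ℂ) from (map_ofNat _ 2).symm, ← map_mul]; norm_num
    rw [Derivation.leibniz, Derivation.leibniz_pow, hT, e]
    simp only [smul_eq_mul, nsmul_eq_mul]
    push_cast
    rw [show (1 : PowerSeries ℂ) = PowerSeries.C (1:ℂ) from (map_one _).symm]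
    simp only [derivative_C]
    linear_combination (2 * G 0) * h
  · simp [T, G, F_zero]

/-- `√(1+t²/4)` -/
def Sq : PowerSeries ℂ := T * G 0
/-- `t/2 + √(1+t²/4)` -/
def w : PowerSeries ℂ := PowerSeries.C (1/2:ℂ) * PowerSeries.X + Sq

lemma Chalf : (2 : PowerSeries ℂ) * PowerSeries.C (1/2:ℂ) = 1 := by
  rw [show (2 : PowerSeries ℂ) = PowerSeries.C (2:ℂ) from (map_ofNat _ 2).symm, ← map_mul]; norm_num
lemma Cquarter : PowerSeries.C (1/4:ℂ) = PowerSeries.C (1/2:ℂ)^2 := by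
  rw [← map_pow]; norm_num

lemma w_sq : w^2 = 1 + PowerSeries.X * w := by
  have h := C_sq
  have h1 := Chalf
  have h2 : Sq^2 = T := by unfold Sq; linear_combination T * h
  unfold w
  have h3 : T = 1 + PowerSeries.C (1/2:ℂ)^2 * PowerSeries.X^2 := by rw [T, Cquarter]
  rw [h3] at h2
  linear_combination h2 + (PowerSeries.X * Sq + PowerSeries.C (1/2:ℂ) * PowerSeries.X^2) * h1

lemma G_step (n : ℤ) : G ((n+1 : ℤ)/2) = w * G ((n:ℝ)/2) := by
  have key : ∀ n : ℤ, G ((n+1+1:ℤ)/2) - w * G ((n+1:ℤ)/2) =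
      (PowerSeries.X - w) * (G ((n+1:ℤ)/2) - w * G ((n:ℝ)/2)) := by
    intro n
    have h := G_rec ((n+1:ℤ)/2)
    rw [show ((n+1:ℤ):ℝ)/2 + 1/2 = ((n+1+1:ℤ):ℝ)/2 by push_cast; ring,
      show ((n+1:ℤ):ℝ)/2 - 1/2 = (n:ℝ)/2 by push_cast; ring] at h
    linear_combination h - G ((n:ℝ)/2) * w_sq
  suffices H : G ((n+1 : ℤ)/2) - w * G ((n:ℝ)/2) = 0 from sub_eq_zero.mp H
  induction n using Int.induction_on with
  | zero =>
    have h := G_half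
    have h1 := C_sq
    simp only [zero_add, Int.cast_one, Int.cast_zero, zero_div]
    rw [h, w, Sq]
    linear_combination -h1
  | succ i ih => rw [key, ih, mul_zero]
  | pred i ih =>
    have h := key (-(i:ℤ) - 1)
    rw [sub_add_cancel] at h
    rw [ih] at h
    rw [sub_add_cancel]
    linear_combination w * h -(G (((-(i:ℤ):ℤ):ℝ)/2) - w * G (((-(i:ℤ)-1:ℤ):ℝ)/2)) * w_sq


open PowerSeries (rescale coeff) in
lemma G0_even : rescale (-1:ℂ) (G 0) = G 0 := by
  ext n
  rw [PowerSeries.coeff_rescale]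
  rcases Nat.even_or_odd n with h | h
  · rw [h.neg_one_pow, one_mul]
  · simp [G, c_odd n (Nat.odd_iff.mp h)]

open PowerSeries (rescale coeff) in
lemma rescale_C' (a b : ℂ) : rescale a (PowerSeries.C b) = PowerSeries.C b := by
  ext n
  rw [PowerSeries.coeff_rescale, PowerSeries.coeff_C]
  split_ifs with h
  · simp [h]
  · simp

open PowerSeries (rescale coeff) in
lemma rescale_neg_w : rescale (-1:ℂ) w = w - PowerSeries.X := by
  have h1 := Chalf
  have h : rescale (-1:ℂ) Sq = Sq := by
    unfold Sq T
    rw [map_mul, map_add, map_mul, map_pow, map_one, G0_even, rescale_C', PowerSeries.rescale_X]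
    simp
  unfold w
  rw [map_add, map_mul, h, rescale_C', PowerSeries.rescale_X]
  simp only [map_neg, map_one]
  linear_combination -PowerSeries.X * h1

open PowerSeries (rescale coeff) in
lemma w_mul_neg : rescale (-1:ℂ) w * w = 1 := by
  rw [rescale_neg_w]; linear_combination w_sq

open PowerSeries (rescale coeff) in
lemma G_step_neg (n : ℤ) : G ((n-1 : ℤ)/2) = rescale (-1:ℂ) w * G ((n:ℝ)/2) := by
  have h := G_step (n-1)
  rw [sub_add_cancel] at h
  rw [h, ← mul_assoc, w_mul_neg, one_mul]

open PowerSeries (rescale coeff) in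
/-- generating series of `k ↦ Z k (v/2)` -/
def ZS (v : ℤ × ℤ) : PowerSeries ℂ := G ((v.1:ℝ)/2) * rescale Complex.I (G ((v.2:ℝ)/2))

lemma coeff_ZS (k : ℕ) (v : ℤ × ℤ) :
    PowerSeries.coeff k (ZS v) = Z k ((v.1:ℝ)/2) ((v.2:ℝ)/2) := by
  unfold ZS Z
  rw [PowerSeries.coeff_mul, ← Finset.Nat.sum_antidiagonal_swap, Finset.Nat.sum_antidiagonal_eq_sum_range_succ_mk]
  refine Finset.sum_congr rfl fun l _ => ?_
  simp only [Prod.fst_swap, Prod.snd_swap, PowerSeries.coeff_rescale, G, PowerSeries.coeff_mk]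
  ring

def st : Fin 4 → ℤ × ℤ := ![(1,0),(0,1),(-1,0),(0,-1)]

open PowerSeries (rescale coeff) in
lemma ZS_step (i : Fin 4) (v : ℤ × ℤ) :
    ZS (v + st i) = rescale (Complex.I ^ (i:ℕ)) w * ZS v := by
  have hr : ∀ a b : ℂ, ∀ f : PowerSeries ℂ, rescale a (rescale b f) = rescale (b*a) f := by
    intro a b f; ext n; simp only [PowerSeries.coeff_rescale, mul_pow]; ring
  unfold ZS
  fin_cases i
  · simp only [st]
    simp
    have := G_step v.1
    push_cast at this
    rw [this]; ring
  · simp only [st]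
    simp
    have := G_step v.2
    push_cast at this
    rw [this, map_mul]; ring
  · simp only [st]
    simp
    have := G_step_neg v.1
    push_cast at this
    rw [← sub_eq_add_neg, this]; ring
  · simp only [st]
    simp
    have := G_step_neg v.2
    push_cast at this
    rw [← sub_eq_add_neg, this, map_mul, hr]; simp; ring

open PowerSeries (rescale coeff) in
lemma we_sq (e : ℂ) : (rescale e w)^2 = 1 + PowerSeries.C e * PowerSeries.X * rescale e w := by
  have := congrArg (rescale e) w_sq
  rw [map_pow, map_add, map_one, map_mul, PowerSeries.rescale_X] at this
  exact this

lemma ZS_diff (i : Fin 4) (v : ℤ × ℤ) (k : ℕ) :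
    PowerSeries.coeff (k+1) (ZS (v + st i + st i)) - PowerSeries.coeff (k+1) (ZS v)
      = Complex.I ^ (i:ℕ) * PowerSeries.coeff k (ZS (v + st i)) := by
  rw [← map_sub, ← PowerSeries.coeff_C_mul, ← PowerSeries.coeff_succ_X_mul k]
  refine congrArg (PowerSeries.coeff (k+1)) ?_
  rw [ZS_step, ZS_step]
  linear_combination ZS v * we_sq (Complex.I ^ (i:ℕ))

/-- harmonicity -/
lemma ZS_harm (v : ℤ × ℤ) (k : ℕ) :
    ∑ i, PowerSeries.coeff (k+1) (ZS (v + st i + st i)) = 4 * PowerSeries.coeff (k+1) (ZS v) := by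
  suffices h : ∑ i, (PowerSeries.coeff (k+1) (ZS (v + st i + st i)) - PowerSeries.coeff (k+1) (ZS v)) = 0 by
    rw [Finset.sum_sub_distrib] at h
    simp only [Finset.sum_const, Finset.card_univ, Fintype.card_fin, nsmul_eq_mul] at h
    push_cast at h
    linear_combination h
  simp only [ZS_diff]
  simp only [← PowerSeries.coeff_C_mul]
  rw [← map_sum]
  suffices h : ∑ i : Fin 4, PowerSeries.C (Complex.I ^ (i:ℕ)) * ZS (v + st i) = 0 by rw [h, map_zero]
  simp only [ZS_step]
  have h1 : PowerSeries.C Complex.I ^ 2 = (-1 : PowerSeries ℂ) := by rw [← map_pow]; simp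
  have h2 : PowerSeries.rescale (-Complex.I) w = PowerSeries.rescale Complex.I w - PowerSeries.C Complex.I * PowerSeries.X := by
    have := congrArg (PowerSeries.rescale Complex.I) rescale_neg_w
    rw [map_sub, PowerSeries.rescale_X] at this
    rw [← this]
    ext n; simp only [PowerSeries.coeff_rescale]; rw [neg_pow Complex.I]; ring
  simp only [Fin.sum_univ_four]
  simp
  rw [h2, rescale_neg_w]
  linear_combination (PowerSeries.X * ZS v) * h1

/-- expectation over simple random walk -/
def EE : ℕ → (ℤ × ℤ → ℝ) → ℝ
  | 0, f => f 0
  | n+1, f => (∑ i, EE n (fun x => f (x + st i))) / 4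

lemma EE_add (n : ℕ) (f g : ℤ × ℤ → ℝ) : EE n (fun x => f x + g x) = EE n f + EE n g := by
  induction n generalizing f g with
  | zero => rfl
  | succ n ih => simp only [EE, ih, Finset.sum_add_distrib]; ring

lemma EE_smul (n : ℕ) (c : ℝ) (f : ℤ × ℤ → ℝ) : EE n (fun x => c * f x) = c * EE n f := by
  induction n generalizing f with
  | zero => rfl
  | succ n ih => simp only [EE, ih, ← Finset.mul_sum]; ring

lemma EE_sum {ι : Type} (s : Finset ι) (n : ℕ) (f : ι → ℤ × ℤ → ℝ) :
    EE n (fun x => ∑ i ∈ s, f i x) = ∑ i ∈ s, EE n (f i) := by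
  classical
  induction s using Finset.induction_on with
  | empty =>
    simp only [Finset.sum_empty]
    simpa using EE_smul n 0 (fun _ => 0)
  | insert a s ha ih =>
    simp only [Finset.sum_insert ha]
    rw [EE_add, ih]

lemma EE_nonneg (n : ℕ) (f : ℤ × ℤ → ℝ) (hf : ∀ x, 0 ≤ f x) : 0 ≤ EE n f := by
  induction n generalizing f with
  | zero => exact hf 0
  | succ n ih =>
    unfold EE
    have : ∀ i ∈ Finset.univ, 0 ≤ EE n (fun x => f (x + st i)) := fun i _ => ih _ fun x => hf _
    have := Finset.sum_nonneg this
    positivity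

lemma sum_Sfin_s5 (f : ℤ × ℤ → ℝ) : ∑ s ∈ Sfin, f s = ∑ i, f (st i) := by
  have h : Sfin = Finset.univ.image st := by decide
  have hi : Function.Injective st := by decide
  rw [h, Finset.sum_image hi.injOn]

lemma EE_eq (n : ℕ) (f : ℤ × ℤ → ℝ) :
    (4 : ℝ)⁻¹ ^ n * ∑ s ∈ Fintype.piFinset (fun _ : Fin n => Sfin), f (∑ i, s i) = EE n f := by
  induction n generalizing f with
  | zero => simp [EE]
  | succ n ih =>
    have h : ∑ s ∈ Fintype.piFinset (fun _ : Fin (n+1) => Sfin), f (∑ i, s i)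
        = ∑ a ∈ Sfin, ∑ s ∈ Fintype.piFinset (fun _ : Fin n => Sfin), f ((∑ i, s i) + a) := by
      rw [← Finset.sum_product']
      refine Finset.sum_bij' (fun s _ => (s 0, Fin.tail s)) (fun p _ => Fin.cons p.1 p.2) ?_ ?_ ?_ ?_ ?_
      · intro s hs
        simp only [Fintype.mem_piFinset, Finset.mem_product] at hs ⊢
        exact ⟨hs 0, fun i => hs i.succ⟩
      · intro p hp
        simp only [Fintype.mem_piFinset, Finset.mem_product] at hp ⊢
        intro i
        refine Fin.cases ?_ (fun i => ?_) i
        · simpa using hp.1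
        · simpa using hp.2 i
      · intro s _; simp
      · intro p _; simp
      · intro s _
        simp only [Fin.sum_univ_succ, Fin.tail]
        rw [add_comm]
    rw [h, sum_Sfin_s5, EE, pow_succ, Finset.sum_div, Finset.mul_sum]
    refine Finset.sum_congr rfl fun i _ => ?_
    rw [← ih]; ring

/-- squared modulus of the half-lattice function -/
def sqn (k : ℕ) (v : ℤ × ℤ) : ℝ := ‖PowerSeries.coeff k (ZS v)‖^2

lemma Qk_eq (k n : ℕ) : Qk k n = EE n (fun p => sqn k (p + p + 0)) := by
  unfold Qk Q
  rw [EE_eq n (fun p => ‖Z k p.1 p.2‖^2)]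
  congr 1
  funext p
  unfold sqn
  rw [coeff_ZS]
  congr 3 <;> simp

lemma sqn_harm (k : ℕ) (v : ℤ × ℤ) :
    (∑ i, sqn (k+1) (v + st i + st i)) / 4 - sqn (k+1) v = (∑ i, sqn k (v + st i)) / 4 := by
  have key : ∀ i, sqn k (v + st i) = ‖PowerSeries.coeff (k+1) (ZS (v + st i + st i)) - PowerSeries.coeff (k+1) (ZS v)‖^2 := by
    intro i
    rw [ZS_diff, norm_mul, norm_pow, Complex.norm_I, one_pow, one_mul, sqn]
  simp only [key]
  have h := ZS_harm v k
  simp only [sqn]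
  generalize PowerSeries.coeff (k+1) (ZS v) = z at *
  have gen : ∀ u : Fin 4 → ℂ, ∑ i, u i = 4 * z →
      (∑ i, ‖u i‖^2)/4 - ‖z‖^2 = (∑ i, ‖u i - z‖^2)/4 := by
    intro u hu
    have hre := congrArg Complex.re hu
    have him := congrArg Complex.im hu
    simp [Fin.sum_univ_four] at hre him
    simp only [Fin.sum_univ_four, Complex.sq_norm, Complex.normSq_apply, Complex.sub_re, Complex.sub_im]
    linear_combination (z.re/2) * hre + (z.im/2) * him
  exact gen _ h

lemma fwd_lin (m : ℕ) (f : Fin 4 → ℕ → ℝ) :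
    fwd^[m] (fun n => (∑ i, f i n)/4) = fun n => (∑ i, fwd^[m] (f i) n)/4 := by
  induction m generalizing f with
  | zero => rfl
  | succ m ih =>
    simp only [Function.iterate_succ_apply]
    rw [← ih]
    congr 1
    funext n
    simp only [fwd, Finset.sum_sub_distrib]; ring

lemma fwd_iter (m k n : ℕ) (v : ℤ × ℤ) :
    fwd^[m] (fun n => EE n (fun p => sqn (k+m) (p + p + v))) n
      = EE m (fun v' => EE n (fun p => sqn k (p + p + (v + v')))) := by
  induction m generalizing v n with
  | zero => simp [EE]
  | succ m ih =>
    rw [Function.iterate_succ_apply]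
    have h : fwd (fun n => EE n (fun p => sqn (k+(m+1)) (p + p + v)))
        = fun n => (∑ i, EE n (fun p => sqn (k+m) (p + p + (v + st i))))/4 := by
      funext n
      simp only [fwd, EE]
      rw [← EE_sum, div_eq_inv_mul, ← EE_smul, sub_eq_iff_eq_add, ← EE_sum, div_eq_inv_mul, ← EE_smul, ← EE_add]
      congr 1
      funext p
      have := sqn_harm (k+m) (p+p+v)
      rw [show k + m + 1 = k + (m+1) by ring] at this
      have e1 : ∀ i, p + st i + (p + st i) + v = p + p + v + st i + st i := fun i => by abel
      have e2 : ∀ i, p + p + (v + st i) = p + p + v + st i := fun i => by abel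
      simp only [e1, e2]
      linear_combination this
    rw [h, fwd_lin]
    simp only [ih, EE]
    congr 1
    refine Finset.sum_congr rfl fun i _ => ?_
    congr 1
    funext v'
    congr 1
    funext p
    congr 1
    abel

lemma a_eq (k j : ℕ) (h : j ≤ k) : a k j = EE (k-j) (sqn j) := by
  unfold a
  have h1 : Qk k = fun n => EE n (fun p => sqn (j + (k-j)) (p + p + 0)) := by
    funext n
    rw [Qk_eq, Nat.add_sub_cancel' h]
  rw [h1, fwd_iter]
  simp [EE]

open PowerSeries (rescale coeff)

def Maj (A : PowerSeries ℂ) (P : PowerSeries ℝ) : Prop := ∀ n, ‖coeff n A‖ ≤ coeff n P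

lemma Maj.mul {A B : PowerSeries ℂ} {P R : PowerSeries ℝ} (h1 : Maj A P) (h2 : Maj B R) :
    Maj (A * B) (P * R) := by
  intro n
  rw [PowerSeries.coeff_mul, PowerSeries.coeff_mul]
  refine (norm_sum_le _ _).trans (Finset.sum_le_sum fun p _ => ?_)
  rw [norm_mul]
  exact mul_le_mul (h1 _) (h2 _) (norm_nonneg _) ((norm_nonneg _).trans (h1 _))

/-- `1/(1-t⁴)` -/
def M : PowerSeries ℝ := PowerSeries.mk fun n => if n % 4 = 0 then 1 else 0

lemma M_eq : M = 1 + PowerSeries.X^4 * M := by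
  ext n
  rw [map_add, PowerSeries.coeff_X_pow_mul', PowerSeries.coeff_one]
  simp only [M, PowerSeries.coeff_mk]
  rcases Nat.lt_or_ge n 4 with h | h
  · interval_cases n <;> simp
  · have h1 : n ≠ 0 := by omega
    have h2 : (n - 4) % 4 = n % 4 := by omega
    simp [h, h1, h2]

lemma coeff_M_pow (p n : ℕ) :
    coeff n (M^p) = if n % 4 = 0 then (Nat.multichoose p (n/4) : ℝ) else 0 := by
  induction p generalizing n with
  | zero =>
    rw [pow_zero, PowerSeries.coeff_one]
    by_cases h : n = 0
    · simp [h]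
    · by_cases h2 : n % 4 = 0
      · obtain ⟨q, hq⟩ : ∃ q, n / 4 = q + 1 := ⟨n/4 - 1, by omega⟩
        simp [h, hq]
      · simp [h, h2]
  | succ p ih =>
    induction n using Nat.strong_induction_on with
    | _ n ihn =>
      have e : M^(p+1) = M^p + PowerSeries.X^4 * M^(p+1) := by
        linear_combination M^p * M_eq
      rw [e, map_add, ih, PowerSeries.coeff_X_pow_mul']
      rcases Nat.lt_or_ge n 4 with h | h
      · interval_cases n <;> simp
      · rw [if_pos h, ihn (n-4) (by omega)]
        have h2 : (n - 4) % 4 = n % 4 := by omega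
        obtain ⟨q, hq⟩ : ∃ q, n / 4 = q + 1 := ⟨n/4 - 1, by omega⟩
        have h3 : (n-4)/4 = q := by omega
        rw [h2, hq, h3]
        split_ifs
        · rw [Nat.multichoose_succ_succ]; push_cast; ring
        · simp

lemma norm_G0 (n : ℕ) : ‖coeff n (G 0)‖ ≤ (1/2)^n := by
  simp only [G, PowerSeries.coeff_mk, Complex.norm_real, Real.norm_eq_abs]
  exact c_bound n

lemma coeff_w_bound (n : ℕ) : ‖coeff n w‖ ≤ 1 := by
  have e : w = PowerSeries.C (1/2:ℂ) * PowerSeries.X + (G 0 + PowerSeries.C (1/4:ℂ) * (PowerSeries.X^2 * G 0)) := by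
    unfold w Sq T; ring
  rw [e, map_add, map_add, PowerSeries.coeff_C_mul, PowerSeries.coeff_C_mul, PowerSeries.coeff_X_pow_mul', PowerSeries.coeff_X]
  match n with
  | 0 => simpa using norm_G0 0
  | 1 => simp [G, F_one_zero]; norm_num
  | n+2 =>
    have h1 := norm_G0 (n+2)
    have h2 := norm_G0 n
    have h3 : ((1:ℝ)/2)^n ≤ 1 := pow_le_one₀ (by norm_num) (by norm_num)
    simp
    refine (norm_add_le _ _).trans ?_
    rw [norm_mul]
    norm_num
    rw [pow_add] at h1
    linarith

/-- part of `w` with exponents `≡ r mod 4` -/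
def W (r : Fin 4) : PowerSeries ℂ := PowerSeries.mk fun n => if n % 4 = r then coeff n w else 0

lemma W_maj (r : Fin 4) : Maj (W r) (PowerSeries.X^(r:ℕ) * M) := by
  intro n
  rw [PowerSeries.coeff_X_pow_mul']
  simp only [W, M, PowerSeries.coeff_mk]
  have hr := r.2
  split_ifs
  · exact coeff_w_bound n
  · omega
  · omega
  · simp
  · simp
  · simp

lemma w_decomp (i : Fin 4) :
    rescale (Complex.I ^ (i:ℕ)) w = ∑ r : Fin 4, PowerSeries.C ((Complex.I ^ (i:ℕ))^(r:ℕ)) * W r := by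
  ext n
  rw [map_sum]
  simp only [PowerSeries.coeff_C_mul, W, PowerSeries.coeff_mk, PowerSeries.coeff_rescale]
  rw [Finset.sum_eq_single (⟨n % 4, Nat.mod_lt _ (by norm_num)⟩ : Fin 4)]
  · simp only [if_true]
    congr 1
    have h4 : (Complex.I ^ (i:ℕ))^4 = 1 := by
      rw [← pow_mul, mul_comm, pow_mul, Complex.I_pow_four, one_pow]
    conv_lhs => rw [← Nat.div_add_mod n 4, pow_add, pow_mul, h4, one_pow, one_mul]
  · intro r _ hr
    rw [if_neg, mul_zero]
    intro h
    exact hr (Fin.ext h.symm)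
  · simp

lemma parseval (y : Fin 4 → ℂ) :
    (∑ i : Fin 4, ‖∑ r : Fin 4, (Complex.I ^ (i:ℕ))^(r:ℕ) * y r‖^2)/4 = ∑ r, ‖y r‖^2 := by
  simp only [Fin.sum_univ_four, Complex.sq_norm, Complex.normSq_apply]
  simp [pow_succ]
  ring

lemma Z0_maj : Maj (ZS 0) M := by
  have hinv : rescale Complex.I (ZS 0) = ZS 0 := by
    have hr : rescale Complex.I (rescale Complex.I (G 0)) = G 0 := by
      conv_rhs => rw [← G0_even]
      ext n; simp only [PowerSeries.coeff_rescale]; rw [← mul_assoc, ← mul_pow, Complex.I_mul_I]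
    simp only [ZS, Prod.fst_zero, Prod.snd_zero, Int.cast_zero, zero_div]
    rw [map_mul, hr, mul_comm]
  intro n
  simp only [M, PowerSeries.coeff_mk]
  split_ifs with h
  · simp only [ZS, Prod.fst_zero, Prod.snd_zero, Int.cast_zero, zero_div, PowerSeries.coeff_mul]
    refine (norm_sum_le _ _).trans ?_
    have : ∀ p ∈ Finset.HasAntidiagonal.antidiagonal n, ‖coeff p.1 (G 0) * coeff p.2 (rescale Complex.I (G 0))‖ ≤ (1/2)^n := by
      intro p hp
      rw [Finset.HasAntidiagonal.mem_antidiagonal] at hp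
      rw [PowerSeries.coeff_rescale, norm_mul, norm_mul, norm_pow, Complex.norm_I, one_pow, one_mul, ← hp, pow_add]
      exact mul_le_mul (norm_G0 _) (norm_G0 _) (norm_nonneg _) (by positivity)
    refine (Finset.sum_le_sum this).trans ?_
    rw [Finset.sum_const, Finset.Nat.card_antidiagonal, nsmul_eq_mul, one_div, inv_pow]
    rw [mul_inv_le_iff₀ (by positivity), one_mul]
    exact_mod_cast (Nat.lt_two_pow_self : n < 2^n)
  · have h1 : Complex.I^n * coeff n (ZS 0) = coeff n (ZS 0) := by
      rw [← PowerSeries.coeff_rescale, hinv]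
    have h2 : coeff n (ZS 0) = 0 := by
      by_contra hne
      have h3 : Complex.I^n = 1 := mul_right_cancel₀ hne (by rw [h1, one_mul])
      rw [← Nat.div_add_mod n 4, pow_add, pow_mul, Complex.I_pow_four, one_pow, one_mul] at h3
      have h4 : n % 4 < 4 := Nat.mod_lt _ (by norm_num)
      generalize n % 4 = s at *
      interval_cases s
      · exact h rfl
      · have := congrArg Complex.re h3; simp at this
      · have := congrArg Complex.re h3; norm_num at this
      · have := congrArg Complex.re h3; simp [pow_succ] at this
    simp [h2]

lemma coeff_bin (N n : ℕ) : coeff n ((1 + PowerSeries.X)^N : PowerSeries ℝ) = N.choose n := by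
  have h := Polynomial.coeff_one_add_X_pow ℝ N n
  rw [← h, ← Polynomial.coeff_coe]
  simp

lemma choose_sq_le (a b : ℕ) : a.choose b * a.choose b ≤ (2*a).choose (2*b) := by
  have h := Nat.add_choose_eq a a (2*b)
  rw [← two_mul] at h
  rw [h]
  exact Finset.single_le_sum (f := fun ij : ℕ × ℕ => a.choose ij.1 * a.choose ij.2)
    (fun _ _ => Nat.zero_le _) (a := (b,b)) (by simp; ring)

lemma choose_four (a b : ℕ) : a.choose b * a.choose b ≤ (4*a).choose (4*b) := by
  refine (choose_sq_le a b).trans ?_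
  have h := choose_sq_le (2*a) (2*b)
  rw [← mul_assoc, ← mul_assoc] at h
  exact (Nat.le_mul_self _).trans h

lemma main_bound (k j : ℕ) (m : ℕ) : ∀ (p l : ℕ) (B : PowerSeries ℂ), m + p + j ≤ k →
    Maj B (PowerSeries.X^l * M^p) →
    EE m (fun v => ‖coeff j (B * ZS v)‖^2)
      ≤ coeff j (PowerSeries.X^l * (1 + PowerSeries.X)^(4*k+3*m) : PowerSeries ℝ) := by
  induction m with
  | zero =>
    intro p l B hk hB
    have h := (hB.mul Z0_maj) j
    rw [mul_assoc, ← pow_succ] at h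
    simp only [EE]
    rw [PowerSeries.coeff_X_pow_mul', coeff_bin]
    rw [PowerSeries.coeff_X_pow_mul', coeff_M_pow] at h
    refine (pow_le_pow_left₀ (norm_nonneg _) h 2).trans ?_
    split_ifs with h1 h2
    · rw [Nat.multichoose_eq, pow_two]
      norm_cast
      refine (choose_four _ _).trans ?_
      rw [show 4 * ((j-l)/4) = j - l by omega]
      apply Nat.choose_le_choose
      omega
    · simp
    · simp
  | succ m ih =>
    intro p l B hk hB
    simp only [EE]
    rw [← EE_sum, div_eq_inv_mul, ← EE_smul]
    have e : (fun v => (4:ℝ)⁻¹ * ∑ i, ‖coeff j (B * ZS (v + st i))‖^2)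
        = fun v => ∑ r, ‖coeff j (B * W r * ZS v)‖^2 := by
      funext v
      rw [← parseval (fun r => coeff j (B * W r * ZS v)), div_eq_inv_mul]
      refine congrArg (fun x : ℝ => (4:ℝ)⁻¹ * x) ?_
      refine Finset.sum_congr rfl fun i _ => ?_
      refine congrArg (fun x : ℂ => ‖x‖^2) ?_
      rw [ZS_step, w_decomp]
      simp only [← PowerSeries.coeff_C_mul]
      rw [← map_sum]
      refine congrArg (coeff j) ?_
      rw [Finset.sum_mul, Finset.mul_sum]
      refine Finset.sum_congr rfl fun r _ => ?_
      ring
    rw [e, EE_sum]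
    have hr : ∀ r ∈ (Finset.univ : Finset (Fin 4)), EE m (fun v => ‖coeff j (B * W r * ZS v)‖^2)
        ≤ coeff j (PowerSeries.X^(l+r) * (1 + PowerSeries.X)^(4*k+3*m) : PowerSeries ℝ) := by
      intro r _
      apply ih (p+1) (l+r) _ (by omega)
      have := hB.mul (W_maj r)
      convert this using 1
      ring
    refine (Finset.sum_le_sum hr).trans ?_
    have hn : ∀ q, 0 ≤ coeff j (PowerSeries.X^q * (1 + PowerSeries.X)^(4*k+3*m) : PowerSeries ℝ) := by
      intro q
      rw [PowerSeries.coeff_X_pow_mul', coeff_bin]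
      positivity
    have e2 : (PowerSeries.X^l * (1 + PowerSeries.X)^(4*k+3*(m+1)) : PowerSeries ℝ)
        = (∑ r : Fin 4, PowerSeries.X^(l+r) * (1 + PowerSeries.X)^(4*k+3*m))
          + (PowerSeries.X^(l+1) * (1 + PowerSeries.X)^(4*k+3*m)
          + PowerSeries.X^(l+1) * (1 + PowerSeries.X)^(4*k+3*m)
          + PowerSeries.X^(l+2) * (1 + PowerSeries.X)^(4*k+3*m)
          + PowerSeries.X^(l+2) * (1 + PowerSeries.X)^(4*k+3*m)) := by
      simp [Fin.sum_univ_four]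
      ring
    rw [e2, map_add, map_sum]
    simp only [map_add]
    have h1 := hn (l+1)
    have h2 := hn (l+2)
    linarith

theorem akj_global_bound :
    ∃ A₁ > (0 : ℝ), ∃ B₁ > (0 : ℝ), ∀ k j : ℕ, j ≤ k →
      0 ≤ a k j ∧ a k j ≤ B₁ * gbinom (A₁ * k) j := by
  refine ⟨7, by norm_num, 1, by norm_num, fun k j h => ?_⟩
  rw [a_eq k j h]
  refine ⟨EE_nonneg _ _ fun v => by unfold sqn; positivity, ?_⟩
  have hb := main_bound k j (k-j) 0 0 1 (by omega) (by
    intro n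
    simp only [pow_zero, mul_one, PowerSeries.coeff_one]
    split_ifs <;> simp)
  simp only [one_mul, pow_zero, coeff_bin] at hb
  have e : (7:ℝ) * k = ((7*k : ℕ) : ℝ) := by push_cast; ring
  rw [e, gb_nat, one_mul]
  refine hb.trans ?_
  exact_mod_cast Nat.choose_le_choose j (by omega)
end
end
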